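/- arXiv:1810.07499 — 2 statements merged into one kernel-verified Lean document; each statement's English description precedes it below -/
import Mathlib

section
/- For every k, l ∈ ℕ ∪ {0} there exist C > 0 and R₀ ≥ 1 such that |∫_{𝕊^{N−1}} (d/dr)^l [𝓛^kΦ(rθ)] dθ| ≤ C r^{−N−(1+(k−1)₊)σ−l} for all r ≥ R₀, where (k−1)₊ = max{k−1, 0}, (d/dr)^l denotes the l-th derivative of the map r ↦ 𝓛^kΦ(rθ) for fixed θ, and dθ is the surface measure on 𝕊^{N−1}. -/
open MeasureTheory Metric Real Set
open scoped InnerProductSpace ENNReal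

noncomputable section

/-- `ℝ^N` as a Euclidean space. -/
abbrev Eu (N : ℕ) := EuclideanSpace ℝ (Fin N)

/-- The unit sphere `𝕊^{N-1} ⊂ ℝ^N`. -/
abbrev Sph (N : ℕ) := Metric.sphere (0 : Eu N) 1

/-- The surface measure `dθ` on the unit sphere. -/
def sphMeas (N : ℕ) : Measure (Sph N) := (volume : Measure (Eu N)).toSphere

/-- The stable operator `𝓛` associated to the order `σ` and the spectral measure `μ`:
`𝓛u(x) = ∫_{𝕊^{N−1}} ∫_0^∞ (u(x) − (u(x+rθ)+u(x−rθ))/2) r^{−1−σ} dr dμ(θ)`. -/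
def Lop (N : ℕ) (σ : ℝ) (μ : Measure (Sph N)) (u : Eu N → ℝ) (x : Eu N) : ℝ :=
  ∫ θ : Sph N, (∫ r in Ioi (0 : ℝ),
    (u x - (u (x + r • (θ : Eu N)) + u (x - r • (θ : Eu N))) / 2) * r ^ (-1 - σ)) ∂μ

/-- The ellipticity (non-degeneracy) condition on the spectral measure. -/
def Elliptic (N : ℕ) (σ : ℝ) (μ : Measure (Sph N)) (lam : ℝ) : Prop :=
  ∀ ζ : Sph N, lam ≤ ∫ θ : Sph N, |⟪(ζ : Eu N), (θ : Eu N)⟫_ℝ| ^ σ ∂μ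

/-- The weight `ρ(x) = (1+|x|)^{−(N+σ)}`. -/
def wt (N : ℕ) (σ : ℝ) (x : Eu N) : ℝ := (1 + ‖x‖) ^ (-((N : ℝ) + σ))

/-- `u ∈ L¹_loc([0,∞); L_ρ)`. -/
def L1locRho (N : ℕ) (σ : ℝ) (u : Eu N → ℝ → ℝ) : Prop :=
  ∀ T > 0, IntegrableOn (fun q : Eu N × ℝ => u q.1 q.2 * wt N σ q.1)
    ((univ : Set (Eu N)) ×ˢ Ioo (0 : ℝ) T) volume

/-- Very weak solution of `∂ₜu + 𝓛u = 𝓛f` in `Q = ℝ^N × (0,∞)` with initial datum `u₀`: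
`∫_Q u ∂ₜζ + ∫ u₀ ζ(·,0) = ∫_Q (u−f) 𝓛ζ` for all `ζ ∈ C_c^∞(ℝ^N × [0,∞))`. -/
def IsVeryWeakSol (N : ℕ) (σ : ℝ) (μ : Measure (Sph N)) (f : Eu N → ℝ → ℝ)
    (u0 : Eu N → ℝ) (u : Eu N → ℝ → ℝ) : Prop :=
  L1locRho N σ u ∧
  ∀ ζ : Eu N × ℝ → ℝ, ContDiff ℝ (⊤ : ℕ∞) ζ → HasCompactSupport ζ →
    (∫ q : Eu N × ℝ in (univ : Set (Eu N)) ×ˢ Ioi (0 : ℝ),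
        u q.1 q.2 * deriv (fun s => ζ (q.1, s)) q.2)
      + (∫ x : Eu N, u0 x * ζ (x, 0))
    = ∫ q : Eu N × ℝ in (univ : Set (Eu N)) ×ˢ Ioi (0 : ℝ),
        (u q.1 q.2 - f q.1 q.2) * Lop N σ μ (fun y => ζ (y, q.2)) q.1

/-- The multiplier `m(ξ)` of `𝓛`. -/
def symb (N : ℕ) (σ : ℝ) (μ : Measure (Sph N)) (ξ : Eu N) : ℝ :=
  ∫ θ : Sph N, (∫ r in Ioi (0 : ℝ),
    (1 - Real.cos (r * ⟪ξ, (θ : Eu N)⟫_ℝ)) * r ^ (-1 - σ)) ∂μ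

/-- `𝓛^kΦ`, the inverse Fourier transform of `m(ξ)^k e^{−m(ξ)}`; `k = 0` gives the
heat-kernel profile `Φ`. -/
def LkPhi (N : ℕ) (σ : ℝ) (μ : Measure (Sph N)) (k : ℕ) (x : Eu N) : ℝ :=
  (2 * π) ^ (-(N : ℝ)) *
    (∫ ξ : Eu N, ((symb N σ μ ξ ^ k * Real.exp (-symb N σ μ ξ) : ℝ) : ℂ) *
        Complex.exp (Complex.I * (⟪x, ξ⟫_ℝ : ℂ))).re

/-- The heat kernel `P(x,t) = t^{−N/σ} Φ(x t^{−1/σ})`. -/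
def heatK (N : ℕ) (σ : ℝ) (μ : Measure (Sph N)) (x : Eu N) (t : ℝ) : ℝ :=
  t ^ (-(N : ℝ) / σ) * LkPhi N σ μ 0 ((t ^ (-(1 : ℝ) / σ)) • x)

/-- `𝓛P(x,t) = t^{−N/σ−1} (𝓛Φ)(x t^{−1/σ})`. -/
def LheatK (N : ℕ) (σ : ℝ) (μ : Measure (Sph N)) (x : Eu N) (t : ℝ) : ℝ :=
  t ^ (-(N : ℝ) / σ - 1) * LkPhi N σ μ 1 ((t ^ (-(1 : ℝ) / σ)) • x)

/-- The σ-parabolic norm `|(x,t)|_σ = (|x|² + |t|^{2/σ})^{1/2}`. -/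
def pnorm (N : ℕ) (σ : ℝ) (x : Eu N) (t : ℝ) : ℝ := Real.sqrt (‖x‖ ^ 2 + |t| ^ (2 / σ))

/-- `f ∈ C^α_σ(Q)` with Hölder constant `c`. -/
def HolderSigma (N : ℕ) (σ α c : ℝ) (f : Eu N → ℝ → ℝ) : Prop :=
  ∀ x t x' t', 0 < t → 0 < t' → |f x t - f x' t'| ≤ c * pnorm N σ (x - x') (t - t') ^ α


/-! ### Iterated finite differences -/

lemma norm_fwdDiff_iter_le_two_pow {E F : Type*} [AddCommGroup E] [SeminormedAddCommGroup F]
    {h : E} (M : ℕ) {f : E → F} {x : E} {B : ℝ} (hB : ∀ j ≤ M, ‖f (x + j • h)‖ ≤ B) :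
    ‖(fwdDiff h)^[M] f x‖ ≤ 2 ^ M * B := by
  induction M generalizing f B with
  | zero => simpa using hB 0 le_rfl
  | succ M ih =>
    rw [Function.iterate_succ_apply, pow_succ, mul_assoc]
    refine ih fun j hj => ?_
    have h1 := hB j (by omega)
    have h2 := hB (j + 1) (by omega)
    rw [add_smul, one_smul, ← add_assoc] at h2
    calc ‖f (x + j • h + h) - f (x + j • h)‖ ≤ ‖f (x + j • h + h)‖ + ‖f (x + j • h)‖ :=
          norm_sub_le _ _
      _ ≤ 2 * B := by linarith

/-- Cauchy estimates for iterated differences of a bounded holomorphic function. -/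
lemma norm_fwdDiff_iter_le_of_differentiableOn (M : ℕ) {g : ℂ → ℂ} {c h : ℂ} {δ B : ℝ}
    (hδ : 0 < δ) (hh : ‖h‖ ≤ δ) (hd : DifferentiableOn ℂ g (ball c ((2 * M + 1) * δ)))
    (hB : ∀ z ∈ ball c ((2 * M + 1) * δ), ‖g z‖ ≤ B) :
    ‖(fwdDiff h)^[M] g c‖ ≤ (‖h‖ / δ) ^ M * B := by
  induction M generalizing g B with
  | zero => simpa using hB c (by simpa using hδ)
  | succ M ih =>
    rw [Function.iterate_succ_apply, pow_succ, mul_assoc]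
    push_cast at hd hB
    have hshift : ∀ z ∈ ball c ((2 * M + 1) * δ), z + h ∈ ball c ((2 * M + 2) * δ) := by
      intro z hz
      rw [mem_ball, dist_eq_norm] at hz ⊢
      calc ‖z + h - c‖ = ‖(z - c) + h‖ := by congr 1; ring
        _ ≤ ‖z - c‖ + ‖h‖ := norm_add_le _ _
        _ < _ := by nlinarith
    have hsub : ball c ((2 * M + 2) * δ) ⊆ ball c ((2 * (M + 1) + 1) * δ) :=
      ball_subset_ball (by nlinarith)
    have hsub' : ball c ((2 * M + 1) * δ) ⊆ ball c ((2 * M + 2) * δ) :=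
      ball_subset_ball (by nlinarith)
    refine ih ?_ fun z hz => ?_
    · refine DifferentiableOn.sub ?_ (hd.mono (hsub'.trans hsub))
      exact hd.comp (by fun_prop) fun z hz => hsub (hshift z hz)
    · have key : ∀ w ∈ ball c ((2 * M + 2) * δ), ‖deriv g w‖ ≤ B / δ := by
        intro w hw
        have hcl : closedBall w δ ⊆ ball c ((2 * (M + 1) + 1) * δ) := by
          intro v hv
          rw [mem_closedBall] at hv
          rw [mem_ball] at hw ⊢
          calc dist v c ≤ dist v w + dist w c := dist_triangle _ _ _
            _ < _ := by nlinarith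
        refine Complex.norm_deriv_le_of_forall_mem_sphere_norm_le hδ ?_
          fun v hv => hB v (hcl (sphere_subset_closedBall hv))
        exact (hd.mono ((closure_ball_subset_closedBall).trans hcl)).diffContOnCl
      have := (convex_ball c ((2 * M + 2) * δ)).norm_image_sub_le_of_norm_deriv_le
        (fun w hw => (hd.differentiableAt
          (isOpen_ball.mem_nhds (hsub hw)))) key (hsub' hz) (hshift z hz)
      calc ‖g (z + h) - g z‖ ≤ B / δ * ‖z + h - z‖ := this
        _ = ‖h‖ / δ * B := by rw [add_sub_cancel_left]; ring

lemma fwdDiff_iter_pow_eq_zero {l M : ℕ} (hl : l < M) (h c : ℂ) (z : ℂ) :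
    (fwdDiff h)^[M] (fun w => (c * w) ^ l) z = 0 := by
  have key : ∀ y : ℂ, (fwdDiff (1 : ℂ))^[M] (fun w => (c * (z + h * w)) ^ l) y = 0 := by
    have := Polynomial.fwdDiff_iter_eq_zero_of_degree_lt
      (P := (Polynomial.C c * (Polynomial.C z + Polynomial.C h * Polynomial.X)) ^ l) (n := M) ?_
    · intro y
      have h2 := congrFun this y
      simpa [Function.comp_def] using h2
    · refine lt_of_le_of_lt ?_ hl
      compute_degree
  have h0 := key 0
  rw [fwdDiff_iter_eq_sum_shift] at h0 ⊢
  simpa [mul_comm h] using h0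

/-! ### The radial profile and its holomorphic extension -/

/-- The function `(au)^k e^{-au}`, with its value at `u = 0` subtracted. -/
def expProfile (a : ℝ) (k : ℕ) (u : ℂ) : ℂ :=
  (a * u) ^ k * Complex.exp (-(a * u)) - 0 ^ k

lemma norm_expProfile_le {a : ℝ} (ha : 0 ≤ a) (k : ℕ) {u : ℂ} (hu : 0 ≤ u.re) :
    ‖expProfile a k u‖ ≤ 2 * (a * ‖u‖) ^ (max k 1) := by
  have hn : ‖(a : ℂ) * u‖ = a * ‖u‖ := by simp [abs_of_nonneg ha]
  have he : ‖Complex.exp (-(a * u))‖ ≤ 1 := by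
    rw [Complex.norm_exp]
    simp
    positivity
  have h0 : 0 ≤ a * ‖u‖ := by positivity
  unfold expProfile
  rcases Nat.eq_zero_or_pos k with rfl | hk
  · simp only [pow_zero, one_mul, zero_le, sup_of_le_right, pow_one]
    rcases le_total (a * ‖u‖) 1 with h1 | h1
    · have := Complex.norm_exp_sub_one_le (x := -(a * u)) (by rwa [norm_neg, hn])
      rwa [norm_neg, hn] at this
    · calc _ ≤ ‖Complex.exp (-(a * u))‖ + ‖(1 : ℂ)‖ := norm_sub_le _ _
        _ ≤ 2 * (a * ‖u‖) := by rw [norm_one]; linarith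
  · rw [zero_pow hk.ne', sub_zero, norm_mul, norm_pow, hn, max_eq_left hk]
    have : (a * ‖u‖) ^ k * ‖Complex.exp (-(a * u))‖ ≤ (a * ‖u‖) ^ k * 1 := by gcongr
    have := pow_nonneg h0 k
    linarith

lemma re_cpow_nonneg {w : ℂ} (hw : 0 ≤ w.re) {s : ℝ} (hs0 : 0 ≤ s) (hs1 : s ≤ 1) :
    0 ≤ (w ^ (s : ℂ)).re := by
  rcases eq_or_ne w 0 with rfl | h0
  · rcases eq_or_ne s 0 with rfl | hs
    · simp
    · rw [Complex.zero_cpow (by exact_mod_cast hs)]; simp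
  · rw [Complex.cpow_def_of_ne_zero h0, Complex.exp_re]
    refine mul_nonneg (Real.exp_nonneg _) (Real.cos_nonneg_of_mem_Icc ?_)
    have h1 := Complex.abs_arg_le_pi_div_two_iff.2 hw
    have h2 : (Complex.log w * s).im = w.arg * s := by simp [Complex.log_im]
    rw [h2, mem_Icc, ← abs_le, abs_mul, abs_of_nonneg hs0]
    calc |w.arg| * s ≤ (π / 2) * 1 := by gcongr
      _ = π / 2 := mul_one _

/-- The holomorphic extension along a line of `ξ ↦ expProfile a k (‖ξ‖ ^ σ) * (i ω·ξ) ^ l`,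
where `q` is the squared distance from the line to the origin. -/
def lineProfile (a σ : ℝ) (k l : ℕ) (q : ℝ) (z : ℂ) : ℂ :=
  expProfile a k ((z ^ 2 + q) ^ ((σ / 2 : ℝ) : ℂ)) * (Complex.I * z) ^ l

lemma norm_sq_add_sub_le {t q R : ℝ} (hq : 0 ≤ q) (hR : 0 < R) (hRq : t ^ 2 + q = R ^ 2) {z : ℂ}
    (hz : ‖z - t‖ ≤ R / 4) : ‖z‖ ≤ 2 * R ∧ ‖z ^ 2 + q - (R ^ 2 : ℝ)‖ ≤ 9 / 16 * R ^ 2 := by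
  have ht : |t| ≤ R := abs_le_of_sq_le_sq (by linarith) hR.le
  have htn : ‖(t : ℂ)‖ ≤ R := by simpa using ht
  constructor
  · calc ‖z‖ = ‖(z - t) + t‖ := by congr 1; ring
      _ ≤ ‖z - t‖ + ‖(t : ℂ)‖ := norm_add_le _ _
      _ ≤ 2 * R := by linarith
  · have : z ^ 2 + q - (R ^ 2 : ℝ) = 2 * t * (z - t) + (z - t) ^ 2 := by
      rw [← hRq]; push_cast; ring
    rw [this]
    calc _ ≤ ‖2 * t * (z - t)‖ + ‖(z - t) ^ 2‖ := norm_add_le _ _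
      _ = 2 * ‖(t : ℂ)‖ * ‖z - t‖ + ‖z - t‖ ^ 2 := by simp
      _ ≤ 2 * R * (R / 4) + (R / 4) ^ 2 := by gcongr
      _ = _ := by ring

lemma lineProfile_bound {a σ t q R : ℝ} (ha : 0 ≤ a) (hσ0 : 0 < σ) (hσ2 : σ < 2) (k l : ℕ)
    (hq : 0 ≤ q) (hR : 0 < R) (hRq : t ^ 2 + q = R ^ 2) :
    DifferentiableOn ℂ (lineProfile a σ k l q) (ball t (R / 4)) ∧
    ∀ z ∈ ball (t : ℂ) (R / 4), ‖lineProfile a σ k l q z‖ ≤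
      2 * a ^ (max k 1) * (2 * R) ^ (σ * (max k 1 : ℕ) + l) := by
  have hre : ∀ z ∈ ball (t : ℂ) (R / 4), 0 < (z ^ 2 + q : ℂ).re := by
    intro z hz
    rw [mem_ball, dist_eq_norm] at hz
    have h1 := (norm_sq_add_sub_le hq hR hRq hz.le).2
    have h2 := (abs_le.1 ((Complex.abs_re_le_norm _).trans h1)).1
    rw [Complex.sub_re, Complex.ofReal_re] at h2
    nlinarith [sq_pos_of_pos hR]
  constructor
  · intro z hz
    have : z ^ 2 + q ∈ Complex.slitPlane := Or.inl (hre z hz)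
    unfold lineProfile expProfile
    refine DifferentiableAt.differentiableWithinAt ?_
    have h3 : DifferentiableAt ℂ (fun z : ℂ => (z ^ 2 + q) ^ ((σ / 2 : ℝ) : ℂ)) z :=
      DifferentiableAt.cpow (by fun_prop) (by fun_prop) this
    fun_prop
  · intro z hz
    have hre' := hre z hz
    rw [mem_ball, dist_eq_norm] at hz
    obtain ⟨h1, h2⟩ := norm_sq_add_sub_le hq hR hRq hz.le
    have h3 : ‖z ^ 2 + q‖ ≤ (2 * R) ^ 2 := by
      calc ‖z ^ 2 + q‖ = ‖(z ^ 2 + q - (R ^ 2 : ℝ)) + (R ^ 2 : ℝ)‖ := by congr 1; ring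
        _ ≤ ‖z ^ 2 + q - (R ^ 2 : ℝ)‖ + ‖((R ^ 2 : ℝ) : ℂ)‖ := norm_add_le _ _
        _ ≤ 9 / 16 * R ^ 2 + R ^ 2 := by
          gcongr
          rw [Complex.norm_real, Real.norm_of_nonneg (sq_nonneg R)]
        _ ≤ _ := by nlinarith [sq_nonneg R]
    have h4 : ‖(z ^ 2 + q : ℂ) ^ ((σ / 2 : ℝ) : ℂ)‖ ≤ (2 * R) ^ σ := by
      rw [Complex.norm_cpow_real]
      calc ‖z ^ 2 + q‖ ^ (σ / 2) ≤ ((2 * R) ^ 2) ^ (σ / 2) := by gcongr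
        _ = (2 * R) ^ σ := by
          rw [← Real.rpow_natCast, ← Real.rpow_mul (by positivity)]; congr 1; push_cast; ring
    have h5 := norm_expProfile_le ha k
      (re_cpow_nonneg hre'.le (s := σ / 2) (by linarith) (by linarith))
    unfold lineProfile
    rw [norm_mul, norm_pow, norm_mul, Complex.norm_I, one_mul]
    calc _ ≤ 2 * (a * (2 * R) ^ σ) ^ (max k 1) * (2 * R) ^ l := by
          gcongr
          exact h5.trans (by gcongr)
      _ = _ := by
        rw [Real.rpow_add (by positivity), Real.rpow_mul (by positivity), Real.rpow_natCast,
          Real.rpow_natCast, mul_pow]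
        ring

section Oscillatory

variable {E : Type*} [NormedAddCommGroup E] [InnerProductSpace ℝ E]

/-- The function `expProfile a k (‖ξ‖ ^ σ) * (i ω·ξ) ^ l` on an inner product space. -/
def dirProfile (a σ : ℝ) (k l : ℕ) (ω ξ : E) : ℂ :=
  expProfile a k (‖ξ‖ ^ σ : ℝ) * (Complex.I * ⟪ω, ξ⟫_ℝ) ^ l

lemma dirProfile_add_smul (a σ : ℝ) (k l : ℕ) {ω : E} (hω : ‖ω‖ = 1) (ξ : E) (s : ℝ) :
    dirProfile a σ k l ω (ξ + s • ω) =
      lineProfile a σ k l (‖ξ‖ ^ 2 - ⟪ω, ξ⟫_ℝ ^ 2) ((⟪ω, ξ⟫_ℝ + s : ℝ) : ℂ) := by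
  have h1 : ⟪ω, ξ + s • ω⟫_ℝ = ⟪ω, ξ⟫_ℝ + s := by
    rw [inner_add_right, inner_smul_right, real_inner_self_eq_norm_sq, hω]; ring
  have h2 : ‖ξ + s • ω‖ ^ 2 = (⟪ω, ξ⟫_ℝ + s) ^ 2 + (‖ξ‖ ^ 2 - ⟪ω, ξ⟫_ℝ ^ 2) := by
    rw [norm_add_sq_real, inner_smul_right, norm_smul, hω, real_inner_comm, Real.norm_eq_abs,
      mul_one, sq_abs]
    ring
  have h3 : ‖ξ + s • ω‖ ^ σ = (‖ξ + s • ω‖ ^ 2) ^ (σ / 2) := by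
    rw [← Real.rpow_natCast, ← Real.rpow_mul (norm_nonneg _)]; congr 1; push_cast; ring
  unfold dirProfile lineProfile
  rw [h1, h3, Complex.ofReal_cpow (sq_nonneg _), h2]
  push_cast
  rfl

lemma fwdDiff_iter_dirProfile (a σ : ℝ) (k l M : ℕ) {ω : E} (hω : ‖ω‖ = 1) (ξ : E) (h : ℝ) :
    (fwdDiff (h • ω))^[M] (dirProfile a σ k l ω) ξ =
      (fwdDiff (h : ℂ))^[M] (lineProfile a σ k l (‖ξ‖ ^ 2 - ⟪ω, ξ⟫_ℝ ^ 2)) (⟪ω, ξ⟫_ℝ : ℂ) := by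
  rw [fwdDiff_iter_eq_sum_shift, fwdDiff_iter_eq_sum_shift]
  refine Finset.sum_congr rfl fun j _ => ?_
  have : j • (h • ω) = (j * h) • ω := by
    rw [mul_smul, Nat.cast_smul_eq_nsmul]
  rw [this, dirProfile_add_smul a σ k l hω]
  congr 2
  simp

lemma norm_dirProfile_le {a σ : ℝ} (ha : 0 ≤ a) (k l : ℕ) {ω : E} (hω : ‖ω‖ = 1) (ξ : E)
    {R : ℝ} (hσ : 0 < σ) (hR : 0 < R) (hξ : ‖ξ‖ ≤ R) :
    ‖dirProfile a σ k l ω ξ‖ ≤ 2 * a ^ (max k 1) * R ^ (σ * (max k 1 : ℕ) + l) := by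
  have h1 := norm_expProfile_le ha k (u := (‖ξ‖ ^ σ : ℝ)) (by simp; positivity)
  have h2 : |⟪ω, ξ⟫_ℝ| ≤ R := by
    refine (abs_real_inner_le_norm _ _).trans ?_
    rwa [hω, one_mul]
  rw [Complex.norm_real, Real.norm_of_nonneg (by positivity)] at h1
  unfold dirProfile
  rw [norm_mul, norm_pow, norm_mul, Complex.norm_I, one_mul, Complex.norm_real, Real.norm_eq_abs]
  calc _ ≤ 2 * (a * R ^ σ) ^ (max k 1) * R ^ l := by
        gcongr
        exact h1.trans (by gcongr)
    _ = _ := by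
      rw [Real.rpow_add (by positivity), Real.rpow_mul (by positivity), Real.rpow_natCast,
        Real.rpow_natCast, mul_pow]
      ring

lemma exists_norm_fwdDiff_iter_dirProfile_le {σ : ℝ} (hσ0 : 0 < σ) (hσ2 : σ < 2)
    (k l M : ℕ) (hM : σ * (max k 1 : ℕ) + l ≤ M) :
    ∃ C ≥ 0, ∀ a ≥ 0, ∀ ω : E, ‖ω‖ = 1 → ∀ h > 0, ∀ ξ : E,
      ‖(fwdDiff (h • ω))^[M] (dirProfile a σ k l ω) ξ‖ ≤
        C * a ^ (max k 1) * (h ^ (σ * (max k 1 : ℕ) + l) *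
          (1 + ‖h⁻¹ • ξ‖) ^ (-((M : ℝ) - (σ * (max k 1 : ℕ) + l)))) := by
  set d : ℝ := σ * (max k 1 : ℕ) + l with hd
  have hd0 : 0 ≤ d := by positivity
  set A : ℝ := 4 * (2 * M + 1) with hA
  have hA1 : 1 ≤ A := by rw [hA]; linarith [(Nat.cast_nonneg M : (0 : ℝ) ≤ M)]
  set C₁ : ℝ := 2 ^ M * (2 * (A + M) ^ d) * (1 + A) ^ ((M : ℝ) - d) with hC₁
  set C₂ : ℝ := A ^ M * (2 * 2 ^ d) * 2 ^ ((M : ℝ) - d) with hC₂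
  have hC₁0 : 0 ≤ C₁ := by positivity
  have hC₂0 : 0 ≤ C₂ := by positivity
  refine ⟨C₁ + C₂, by positivity, fun a ha ω hω h hh ξ => ?_⟩
  have hx : ‖h⁻¹ • ξ‖ = ‖ξ‖ / h := by
    rw [norm_smul, norm_inv, Real.norm_of_nonneg hh.le, inv_mul_eq_div]
  rw [hx]
  set x := ‖ξ‖ / h with hxdef
  have hx0 : 0 ≤ x := by positivity
  have hξ : ‖ξ‖ = x * h := by rw [hxdef]; field_simp
  have hMd : 0 ≤ (M : ℝ) - d := by linarith
  rcases le_total x A with hxA | hxA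
  · have h1 : ‖(fwdDiff (h • ω))^[M] (dirProfile a σ k l ω) ξ‖ ≤
        2 ^ M * (2 * a ^ (max k 1) * ((A + M) * h) ^ d) := by
      refine norm_fwdDiff_iter_le_two_pow M fun j hj => ?_
      refine norm_dirProfile_le ha k l hω _ hσ0 (by positivity) ?_
      calc ‖ξ + j • h • ω‖ ≤ ‖ξ‖ + ‖j • h • ω‖ := norm_add_le _ _
        _ = x * h + j * h := by
          rw [← Nat.cast_smul_eq_nsmul ℝ, norm_smul, norm_smul, hω, hξ]
          simp [abs_of_pos hh]
        _ ≤ A * h + M * h := by gcongr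
        _ = _ := by ring
    have h2 : 1 ≤ (1 + A) ^ ((M : ℝ) - d) * (1 + x) ^ (-((M : ℝ) - d)) := by
      rw [Real.rpow_neg (by positivity), ← div_eq_mul_inv, one_le_div (by positivity)]
      gcongr
    calc _ ≤ 2 ^ M * (2 * a ^ (max k 1) * ((A + M) * h) ^ d) * 1 := by rwa [mul_one]
      _ ≤ 2 ^ M * (2 * a ^ (max k 1) * ((A + M) * h) ^ d) *
          ((1 + A) ^ ((M : ℝ) - d) * (1 + x) ^ (-((M : ℝ) - d))) := by gcongr
      _ = C₁ * a ^ (max k 1) * (h ^ d * (1 + x) ^ (-((M : ℝ) - d))) := by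
        rw [Real.mul_rpow (by positivity) hh.le]; ring
      _ ≤ _ := by gcongr; linarith
  · have hxpos : 0 < x := by linarith
    have hR : 0 < ‖ξ‖ := by rw [hξ]; positivity
    have hq : 0 ≤ ‖ξ‖ ^ 2 - ⟪ω, ξ⟫_ℝ ^ 2 := by
      have := abs_real_inner_le_norm ω ξ
      rw [hω, one_mul] at this
      have := sq_le_sq' (by linarith [(abs_le.1 this).1]) (abs_le.1 this).2
      linarith
    obtain ⟨hdiff, hbd⟩ := lineProfile_bound (t := ⟪ω, ξ⟫_ℝ) ha hσ0 hσ2 k l hq hR (by ring)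
    have hrad : ‖ξ‖ / 4 = (2 * M + 1) * (‖ξ‖ / A) := by rw [hA]; field_simp
    rw [hrad] at hdiff hbd
    have hle : ‖(h : ℂ)‖ ≤ ‖ξ‖ / A := by
      rw [Complex.norm_real, Real.norm_of_nonneg hh.le, le_div_iff₀ (by positivity), hξ, mul_comm]
      gcongr
    have h1 := norm_fwdDiff_iter_le_of_differentiableOn M (by positivity) hle hdiff hbd
    rw [← fwdDiff_iter_dirProfile a σ k l M hω, Complex.norm_real, Real.norm_of_nonneg hh.le,
      ← hd] at h1
    have h2 : h / (‖ξ‖ / A) = A * x⁻¹ := by rw [hξ]; field_simp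
    have h3 : x⁻¹ ^ M * x ^ d ≤ 2 ^ ((M : ℝ) - d) * (1 + x) ^ (-((M : ℝ) - d)) := by
      have h4 : x⁻¹ ^ M * x ^ d = x ^ (-((M : ℝ) - d)) := by
        rw [neg_sub, Real.rpow_sub hxpos, Real.rpow_natCast, inv_pow]; field_simp
      rw [h4, Real.rpow_neg hxpos.le, Real.rpow_neg (by positivity), ← div_eq_mul_inv,
        ← one_div, div_le_div_iff₀ (by positivity) (by positivity), one_mul,
        ← Real.mul_rpow (by positivity) hxpos.le]
      gcongr
      linarith
    rw [h2, hξ] at h1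
    calc _ ≤ (A * x⁻¹) ^ M * (2 * a ^ (max k 1) * (2 * (x * h)) ^ d) := h1
      _ = A ^ M * (2 * 2 ^ d) * a ^ (max k 1) * h ^ d * (x⁻¹ ^ M * x ^ d) := by
        rw [mul_pow, Real.mul_rpow (by positivity) (by positivity),
          Real.mul_rpow hxpos.le hh.le]
        ring
      _ ≤ A ^ M * (2 * 2 ^ d) * a ^ (max k 1) * h ^ d *
          (2 ^ ((M : ℝ) - d) * (1 + x) ^ (-((M : ℝ) - d))) := by gcongr
      _ = C₂ * a ^ (max k 1) * (h ^ d * (1 + x) ^ (-((M : ℝ) - d))) := by ring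
      _ ≤ _ := by gcongr; linarith

/-- Radial multiplier times a power of the directional frequency, as it appears in the
directional derivatives of the inverse Fourier transform of `(a|ξ|^σ)^k e^{-a|ξ|^σ}`. -/
def radialMult (a σ : ℝ) (k l : ℕ) (ω ξ : E) : ℂ :=
  (((a * ‖ξ‖ ^ σ) ^ k * Real.exp (-(a * ‖ξ‖ ^ σ)) : ℝ) : ℂ) * (Complex.I * ⟪ω, ξ⟫_ℝ) ^ l

lemma fwdDiff_iter_radialMult (a σ : ℝ) {k l M : ℕ} (hM : l < M) {ω : E} (hω : ‖ω‖ = 1) (ξ : E)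
    (h : ℝ) :
    (fwdDiff (h • ω))^[M] (radialMult a σ k l ω) ξ =
      (fwdDiff (h • ω))^[M] (dirProfile a σ k l ω) ξ := by
  have h1 : radialMult a σ k l ω =
      dirProfile a σ k l ω + (0 ^ k : ℂ) • fun ξ => (Complex.I * ⟪ω, ξ⟫_ℝ) ^ l := by
    funext ξ
    simp only [radialMult, dirProfile, expProfile, Pi.add_apply, Pi.smul_apply, smul_eq_mul]
    push_cast
    ring
  have h2 : (fwdDiff (h • ω))^[M] (fun ξ => (Complex.I * (⟪ω, ξ⟫_ℝ : ℂ)) ^ l) ξ = 0 := by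
    rw [← fwdDiff_iter_pow_eq_zero hM (h : ℂ) Complex.I (⟪ω, ξ⟫_ℝ : ℂ),
      fwdDiff_iter_eq_sum_shift, fwdDiff_iter_eq_sum_shift]
    refine Finset.sum_congr rfl fun j _ => ?_
    rw [inner_add_right, ← Nat.cast_smul_eq_nsmul ℝ, inner_smul_right, inner_smul_right,
      real_inner_self_eq_norm_sq, hω]
    simp
  rw [h1, fwdDiff_iter_add, fwdDiff_iter_const_smul]
  simp [h2]

variable [FiniteDimensional ℝ E] [MeasurableSpace E] [BorelSpace E]

lemma integrable_mul_cexp_inner {f : E → ℂ} (hf : Integrable f) (x : E) :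
    Integrable fun ξ => f ξ * Complex.exp (Complex.I * (⟪x, ξ⟫_ℝ : ℂ)) := by
  refine hf.mul_bdd (c := 1) (by fun_prop) (Filter.Eventually.of_forall fun ξ => ?_)
  rw [mul_comm, Complex.norm_exp_ofReal_mul_I]

/-- Differences with half-period step act by multiplication by `-2` on Fourier integrals. -/
lemma integral_fwdDiff_iter_mul_cexp {f : E → ℂ} (hf : Integrable f) {x h : E}
    (hxh : ⟪x, h⟫_ℝ = π) (M : ℕ) :
    ∫ ξ, (fwdDiff h)^[M] f ξ * Complex.exp (Complex.I * (⟪x, ξ⟫_ℝ : ℂ)) =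
      (-2) ^ M * ∫ ξ, f ξ * Complex.exp (Complex.I * (⟪x, ξ⟫_ℝ : ℂ)) := by
  induction M generalizing f with
  | zero => simp
  | succ M ih =>
    have hs : Integrable fun ξ => f (ξ + h) := hf.comp_add_right h
    simp only [Function.iterate_succ_apply]
    rw [ih (f := fwdDiff h f) (hs.sub hf), pow_succ, mul_assoc]
    congr 1
    have h1 : ∀ ξ, fwdDiff h f ξ * Complex.exp (Complex.I * (⟪x, ξ⟫_ℝ : ℂ)) =
        -(f (ξ + h) * Complex.exp (Complex.I * (⟪x, ξ + h⟫_ℝ : ℂ))) -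
          f ξ * Complex.exp (Complex.I * (⟪x, ξ⟫_ℝ : ℂ)) := by
      intro ξ
      rw [fwdDiff, inner_add_right, hxh, Complex.ofReal_add, mul_add, Complex.exp_add,
        mul_comm Complex.I (π : ℂ), Complex.exp_pi_mul_I]
      ring
    have h2 := integrable_mul_cexp_inner hf x
    have h3 : Integrable fun ξ =>
        -(f (ξ + h) * Complex.exp (Complex.I * (⟪x, ξ + h⟫_ℝ : ℂ))) := (h2.comp_add_right h).neg
    simp_rw [h1]
    rw [integral_sub h3 h2, integral_neg,
      integral_add_right_eq_self
        (fun ξ => f ξ * Complex.exp (Complex.I * (⟪x, ξ⟫_ℝ : ℂ))) h]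
    ring

/-- Decay in the direction `ω` of the `l`-th directional derivative of the inverse Fourier
transform of a radial multiplier. -/
lemma exists_norm_integral_radialMult_le {σ : ℝ} (hσ0 : 0 < σ) (hσ2 : σ < 2) (k l : ℕ) :
    ∃ C ≥ 0, ∀ a ≥ 0, ∀ ω : E, ‖ω‖ = 1 → Integrable (radialMult a σ k l ω) → ∀ r > 0,
      ‖∫ ξ, radialMult a σ k l ω ξ * Complex.exp (Complex.I * (⟪r • ω, ξ⟫_ℝ : ℂ))‖ ≤
        C * a ^ (max k 1) * r ^ (-(Module.finrank ℝ E : ℝ) - (σ * (max k 1 : ℕ) + l)) := by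
  set n := Module.finrank ℝ E with hn
  set d : ℝ := σ * (max k 1 : ℕ) + l with hd
  have hd0 : 0 ≤ d := by positivity
  obtain ⟨M, hM⟩ := exists_nat_gt ((n : ℝ) + d)
  have hn0 : (0 : ℝ) ≤ n := Nat.cast_nonneg n
  have hlM : l < M := by
    have : 0 ≤ σ * (max k 1 : ℕ) := by positivity
    have : (l : ℝ) < M := by linarith
    exact_mod_cast this
  obtain ⟨C, hC, hbd⟩ := exists_norm_fwdDiff_iter_dirProfile_le (E := E) hσ0 hσ2 k l M
    (by linarith)
  rw [← hd] at hbd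
  clear_value d n
  set J : ℝ := ∫ ξ : E, (1 + ‖ξ‖) ^ (-((M : ℝ) - d)) with hJ
  have hJ0 : 0 ≤ J := integral_nonneg fun ξ => by positivity
  refine ⟨C * J * π ^ (d + n), by positivity, fun a ha ω hω hint r hr => ?_⟩
  set h : ℝ := π / r with hh
  have hhpos : 0 < h := by positivity
  have hinner : ⟪r • ω, h • ω⟫_ℝ = π := by
    rw [inner_smul_left, inner_smul_right, real_inner_self_eq_norm_sq, hω, hh]
    simp
    field_simp
  have h1 := integral_fwdDiff_iter_mul_cexp hint hinner M
  have hbig : ‖(-2 : ℂ) ^ M‖ ≥ 1 := by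
    rw [norm_pow]
    simpa using one_le_pow₀ (by norm_num : (1 : ℝ) ≤ 2)
  have hI : Integrable fun ξ : E => (1 + ‖ξ‖) ^ (-((M : ℝ) - d)) :=
    integrable_one_add_norm (by rw [← hn]; linarith)
  calc _ ≤ ‖(-2 : ℂ) ^ M‖ * ‖∫ ξ, radialMult a σ k l ω ξ *
          Complex.exp (Complex.I * (⟪r • ω, ξ⟫_ℝ : ℂ))‖ :=
        le_mul_of_one_le_left (norm_nonneg _) hbig
    _ = ‖∫ ξ, (fwdDiff (h • ω))^[M] (radialMult a σ k l ω) ξ *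
          Complex.exp (Complex.I * (⟪r • ω, ξ⟫_ℝ : ℂ))‖ := by rw [← norm_mul, h1]
    _ ≤ ∫ ξ, C * a ^ (max k 1) * (h ^ d * (1 + ‖h⁻¹ • ξ‖) ^ (-((M : ℝ) - d))) := by
      refine norm_integral_le_of_norm_le ?_ (Filter.Eventually.of_forall fun ξ => ?_)
      · exact ((hI.comp_smul (inv_ne_zero hhpos.ne')).const_mul _).const_mul _
      · rw [norm_mul, mul_comm Complex.I, Complex.norm_exp_ofReal_mul_I, mul_one,
          fwdDiff_iter_radialMult a σ hlM hω]
        exact hbd a ha ω hω h hhpos ξ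
    _ = C * a ^ (max k 1) * (h ^ d * (h ^ n * J)) := by
      rw [integral_const_mul, integral_const_mul,
        Measure.integral_comp_smul volume
          (fun ξ : E => (1 + ‖ξ‖) ^ (-((M : ℝ) - d))) h⁻¹, ← hn, inv_pow, inv_inv,
        abs_of_pos (by positivity), smul_eq_mul]
    _ = _ := by
      rw [hh, ← Real.rpow_natCast (π / r) n, Real.div_rpow pi_pos.le hr.le,
        Real.div_rpow pi_pos.le hr.le, Real.rpow_add pi_pos,
        show -(n : ℝ) - d = -(n + d) by ring, Real.rpow_neg hr.le, Real.rpow_add hr]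
      field_simp

end Oscillatory

/-! ### The symbol -/

/-- The constant `∫_0^∞ (1 - cos r) r^{-1-σ} dr`. -/
def symbConst (σ : ℝ) : ℝ := ∫ r in Ioi (0 : ℝ), (1 - Real.cos r) * r ^ (-1 - σ)

lemma integral_one_sub_cos_mul {σ : ℝ} (hσ0 : 0 < σ) (c : ℝ) :
    ∫ r in Ioi (0 : ℝ), (1 - Real.cos (r * c)) * r ^ (-1 - σ) = |c| ^ σ * symbConst σ := by
  rcases eq_or_ne c 0 with rfl | hc
  · simp [Real.zero_rpow hσ0.ne']
  · have hc' : 0 < |c| := abs_pos.2 hc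
    have h1 : ∫ r in Ioi (0 : ℝ), (1 - Real.cos (r * c)) * r ^ (-1 - σ) =
        ∫ r in Ioi (0 : ℝ), |c| ^ (1 + σ) * ((1 - Real.cos (|c| * r)) * (|c| * r) ^ (-1 - σ)) := by
      refine setIntegral_congr_fun measurableSet_Ioi fun r hr => ?_
      have hr' : 0 < r := hr
      have h2 : Real.cos (|c| * r) = Real.cos (r * c) := by
        rw [← Real.cos_abs (r * c), abs_mul, abs_of_pos hr', mul_comm]
      have h3 : |c| ^ (1 + σ) * |c| ^ (-1 - σ) = 1 := by
        rw [← Real.rpow_add hc']; simp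
      rw [h2, Real.mul_rpow hc'.le hr'.le]
      linear_combination (-(1 - Real.cos (r * c)) * r ^ (-1 - σ)) * h3
    rw [h1, integral_const_mul, integral_comp_mul_left_Ioi
      (fun r => (1 - Real.cos r) * r ^ (-1 - σ)) 0 hc', mul_zero, smul_eq_mul, symbConst,
      Real.rpow_add hc', Real.rpow_one]
    field_simp

lemma symbConst_pos {σ : ℝ} (hσ0 : 0 < σ) (hσ2 : σ < 2) : 0 < symbConst σ := by
  have hnn : ∀ r ∈ Ioi (0 : ℝ), 0 ≤ (1 - Real.cos r) * r ^ (-1 - σ) := fun r hr =>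
    mul_nonneg (by linarith [Real.cos_le_one r]) (Real.rpow_nonneg (le_of_lt hr) _)
  have hmeas : Measurable fun r : ℝ => (1 - Real.cos r) * r ^ (-1 - σ) := by fun_prop
  have hint : IntegrableOn (fun r : ℝ => (1 - Real.cos r) * r ^ (-1 - σ)) (Ioi 0) := by
    rw [← Ioc_union_Ioi_eq_Ioi zero_le_one, integrableOn_union]
    constructor
    · have h1 : IntegrableOn (fun r : ℝ => r ^ (1 - σ)) (Ioc 0 1) := by
        rw [← intervalIntegrable_iff_integrableOn_Ioc_of_le zero_le_one]
        exact intervalIntegral.intervalIntegrable_rpow' (by linarith)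
      refine h1.mono' hmeas.aestronglyMeasurable ?_
      refine (ae_restrict_iff' measurableSet_Ioc).2 (Filter.Eventually.of_forall fun r hr => ?_)
      have hr0 : 0 < r := hr.1
      rw [Real.norm_of_nonneg (hnn r hr0)]
      have h2 : 1 - Real.cos r ≤ r ^ 2 := by
        nlinarith [Real.one_sub_sq_div_two_le_cos (x := r), sq_nonneg r]
      calc _ ≤ r ^ 2 * r ^ (-1 - σ) := by gcongr
        _ = r ^ (1 - σ) := by
          rw [← Real.rpow_natCast, ← Real.rpow_add hr0]; congr 1; push_cast; ring
    · have h1 : IntegrableOn (fun r : ℝ => 2 * r ^ (-1 - σ)) (Ioi 1) :=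
        (integrableOn_Ioi_rpow_of_lt (by linarith) zero_lt_one).const_mul 2
      refine h1.mono' hmeas.aestronglyMeasurable ?_
      refine (ae_restrict_iff' measurableSet_Ioi).2 (Filter.Eventually.of_forall fun r hr => ?_)
      have hr0 : (0 : ℝ) < r := lt_trans zero_lt_one hr
      rw [Real.norm_of_nonneg (hnn r hr0)]
      gcongr
      linarith [Real.neg_one_le_cos r]
  rw [symbConst, setIntegral_pos_iff_support_of_nonneg_ae
    ((ae_restrict_iff' measurableSet_Ioi).2 (Filter.Eventually.of_forall hnn)) hint]
  refine lt_of_lt_of_le (b := volume (Ioo (0 : ℝ) 1)) (by simp) (measure_mono fun r hr => ?_)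
  have hcos : Real.cos r < 1 := by
    have := Real.cos_lt_cos_of_nonneg_of_le_pi le_rfl (by linarith [hr.2, pi_gt_three]) hr.1
    rwa [Real.cos_zero] at this
  exact ⟨(mul_pos (by linarith) (Real.rpow_pos_of_pos hr.1 _)).ne', hr.1⟩

section Symbol

variable {N : ℕ} {σ : ℝ} {μ : Measure (Sph N)}

lemma symb_eq (hσ0 : 0 < σ) (ξ : Eu N) :
    symb N σ μ ξ = (∫ θ : Sph N, |⟪ξ, (θ : Eu N)⟫_ℝ| ^ σ ∂μ) * symbConst σ := by
  simp_rw [symb, integral_one_sub_cos_mul hσ0, integral_mul_const]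

lemma symb_smul (hσ0 : 0 < σ) {s : ℝ} (hs : 0 ≤ s) (ξ : Eu N) :
    symb N σ μ (s • ξ) = symb N σ μ ξ * s ^ σ := by
  simp_rw [symb_eq hσ0, inner_smul_left, abs_mul]
  simp only [conj_trivial, abs_of_nonneg hs, Real.mul_rpow hs (abs_nonneg _), integral_const_mul]
  ring

lemma symb_nonneg (hσ0 : 0 < σ) (hσ2 : σ < 2) (ξ : Eu N) : 0 ≤ symb N σ μ ξ := by
  rw [symb_eq hσ0]
  exact mul_nonneg (integral_nonneg fun θ => by positivity) (symbConst_pos hσ0 hσ2).le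

lemma le_symb_of_elliptic (hσ0 : 0 < σ) (hσ2 : σ < 2) {lam : ℝ} (hell : Elliptic N σ μ lam)
    (ω : Sph N) : lam * symbConst σ ≤ symb N σ μ ω := by
  rw [symb_eq hσ0]
  exact mul_le_mul_of_nonneg_right (hell ω) (symbConst_pos hσ0 hσ2).le

lemma symb_le (hσ0 : 0 < σ) (hσ2 : σ < 2) [IsFiniteMeasure μ] (ω : Sph N) :
    symb N σ μ ω ≤ μ.real univ * symbConst σ := by
  rw [symb_eq hσ0]
  refine mul_le_mul_of_nonneg_right ?_ (symbConst_pos hσ0 hσ2).le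
  have h1 : ∀ θ : Sph N, ‖|⟪(ω : Eu N), (θ : Eu N)⟫_ℝ| ^ σ‖ ≤ 1 := by
    intro θ
    rw [Real.norm_of_nonneg (by positivity)]
    refine Real.rpow_le_one (abs_nonneg _) ?_ hσ0.le
    simpa using abs_real_inner_le_norm (ω : Eu N) (θ : Eu N)
  have h2 := norm_integral_le_of_norm_le_const (μ := μ) (Filter.Eventually.of_forall h1)
  rw [one_mul] at h2
  exact (le_abs_self _).trans h2

lemma measurable_symb (hσ0 : 0 < σ) [IsFiniteMeasure μ] : Measurable (symb N σ μ) := by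
  have h1 : Measurable fun p : Eu N × Sph N => |⟪p.1, (p.2 : Eu N)⟫_ℝ| ^ σ := by
    have : Continuous fun p : Eu N × Sph N => |⟪p.1, (p.2 : Eu N)⟫_ℝ| := by fun_prop
    exact this.measurable.pow_const σ
  have h2 := (h1.stronglyMeasurable.integral_prod_right' (ν := μ)).measurable
  have h3 : symb N σ μ = fun ξ => (∫ θ : Sph N, |⟪ξ, (θ : Eu N)⟫_ℝ| ^ σ ∂μ) * symbConst σ :=
    funext fun ξ => symb_eq hσ0 ξ
  rw [h3]
  exact h2.mul_const _

end Symbol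

/-! ### Polar coordinates -/

section Polar

variable {E : Type*} [NormedAddCommGroup E] [InnerProductSpace ℝ E] [FiniteDimensional ℝ E]
  [MeasurableSpace E] [BorelSpace E] [Nontrivial E]
  {F : Type*} [NormedAddCommGroup F]

lemma integrable_polar_iff {f : E → F} :
    Integrable (fun p : sphere (0 : E) 1 × Ioi (0 : ℝ) => f ((p.2 : ℝ) • (p.1 : E)))
      ((volume : Measure E).toSphere.prod (Measure.volumeIoiPow (Module.finrank ℝ E - 1))) ↔
      Integrable f := by
  have h := (volume : Measure E).measurePreserving_homeomorphUnitSphereProd.integrable_comp_emb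
    (g := fun p : sphere (0 : E) 1 × Ioi (0 : ℝ) => f ((p.2 : ℝ) • (p.1 : E)))
    (Homeomorph.measurableEmbedding _)
  have h' : Integrable f ↔ Integrable (f ∘ (↑) : ({0}ᶜ : Set E) → F)
      (Measure.comap (↑) (volume : Measure E)) := by
    rw [← integrableOn_iff_comap_subtypeVal (measurableSet_singleton _).compl, IntegrableOn,
      restrict_compl_singleton]
  rw [← h, h']
  apply integrable_congr
  filter_upwards with x
  have : ‖(x : E)‖ ≠ 0 := norm_ne_zero_iff.2 x.2
  simp [smul_smul, this]

lemma integral_polar [NormedSpace ℝ F] (f : E → F) :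
    ∫ x, f x = ∫ p : sphere (0 : E) 1 × Ioi (0 : ℝ), f ((p.2 : ℝ) • (p.1 : E))
      ∂((volume : Measure E).toSphere.prod
        (Measure.volumeIoiPow (Module.finrank ℝ E - 1))) := by
  have h : ∫ x, f x = ∫ x : ({0}ᶜ : Set E), f x ∂(Measure.comap (↑) (volume : Measure E)) := by
    rw [integral_subtype_comap (measurableSet_singleton _).compl, restrict_compl_singleton]
  rw [h, ← (volume : Measure E).measurePreserving_homeomorphUnitSphereProd.integral_comp
    (Homeomorph.measurableEmbedding _)]
  apply integral_congr_ae
  filter_upwards with x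
  have : ‖(x : E)‖ ≠ 0 := norm_ne_zero_iff.2 x.2
  simp [smul_smul, this]

lemma integrable_radial_rpow_mul_exp {σ c : ℝ} (hσ : 0 < σ) (hc : 0 < c) (C : ℝ) (k l : ℕ) :
    Integrable fun ξ : E =>
      (C * ‖ξ‖ ^ σ) ^ k * Real.exp (-(c * ‖ξ‖ ^ σ)) * ‖ξ‖ ^ l := by
  rw [integrable_fun_norm_addHaar volume
    (f := fun y : ℝ => (C * y ^ σ) ^ k * Real.exp (-(c * y ^ σ)) * y ^ l)]
  set n := Module.finrank ℝ E - 1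
  have h1 : (-1 : ℝ) < n + σ * k + l := by
    have : 0 ≤ σ * k := by positivity
    have : (0 : ℝ) ≤ n := by positivity
    have : (0 : ℝ) ≤ l := by positivity
    linarith
  refine IntegrableOn.congr_fun ((integrableOn_rpow_mul_exp_neg_mul_rpow h1 hσ hc).const_mul
    (C ^ k)) (fun y hy => ?_) measurableSet_Ioi
  have hy' : 0 < y := hy
  simp only [smul_eq_mul]
  rw [Real.rpow_add hy', Real.rpow_add hy', Real.rpow_mul hy'.le, Real.rpow_natCast,
    Real.rpow_natCast, Real.rpow_natCast, mul_pow, neg_mul]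
  ring

end Polar

lemma integral_integral_prod_swap {X Y F : Type*} [MeasurableSpace X] [MeasurableSpace Y]
    [NormedAddCommGroup F] [NormedSpace ℝ F] {ν : Measure X} {ρ : Measure Y} [SFinite ν]
    [SFinite ρ] {H : X → X → Y → F}
    (hH : Integrable (fun q : X × X × Y => H q.1 q.2.1 q.2.2) (ν.prod (ν.prod ρ))) :
    ∫ x, ∫ p : X × Y, H x p.1 p.2 ∂(ν.prod ρ) ∂ν =
      ∫ x, ∫ p : X × Y, H p.1 x p.2 ∂(ν.prod ρ) ∂ν := by
  have hA := measurePreserving_prodAssoc ν ν ρ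
  have hS := (Measure.measurePreserving_swap (μ := ν) (ν := ν)).prod (MeasurePreserving.id ρ)
  have hT := hA.comp (hS.comp (hA.symm MeasurableEquiv.prodAssoc))
  have hemb : MeasurableEmbedding (MeasurableEquiv.prodAssoc ∘
      Prod.map Prod.swap id ∘ (MeasurableEquiv.prodAssoc (α := X) (β := X) (γ := Y)).symm) :=
    MeasurableEquiv.prodAssoc.measurableEmbedding.comp
      ((MeasurableEquiv.prodCongr MeasurableEquiv.prodComm
        (MeasurableEquiv.refl Y)).measurableEmbedding.comp
        MeasurableEquiv.prodAssoc.symm.measurableEmbedding)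
  have hH' : Integrable (fun q : X × X × Y => H q.2.1 q.1 q.2.2) (ν.prod (ν.prod ρ)) :=
    (hT.integrable_comp_emb hemb).2 hH
  rw [← integral_prod (fun q : X × X × Y => H q.1 q.2.1 q.2.2) hH,
    ← integral_prod (fun q : X × X × Y => H q.2.1 q.1 q.2.2) hH']
  exact (hT.integral_comp hemb (fun q : X × X × Y => H q.1 q.2.1 q.2.2)).symm

/-! ### Directional derivatives of the inverse Fourier transform -/

section Derivative

variable {E : Type*} [NormedAddCommGroup E] [InnerProductSpace ℝ E] [FiniteDimensional ℝ E]
  [MeasurableSpace E] [BorelSpace E]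

lemma hasDerivAt_integral_mul_cexp {w : E → ℝ} (hw : Measurable w)
    (hint : ∀ l : ℕ, Integrable fun ξ => w ξ * ‖ξ‖ ^ l) {ω : E} (hω : ‖ω‖ = 1) (l : ℕ) (s : ℝ) :
    HasDerivAt (fun s : ℝ => ∫ ξ, (w ξ : ℂ) * (Complex.I * ⟪ω, ξ⟫_ℝ) ^ l *
        Complex.exp (Complex.I * (⟪s • ω, ξ⟫_ℝ : ℂ)))
      (∫ ξ, (w ξ : ℂ) * (Complex.I * ⟪ω, ξ⟫_ℝ) ^ (l + 1) *
        Complex.exp (Complex.I * (⟪s • ω, ξ⟫_ℝ : ℂ))) s := by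
  have hmeas : ∀ (j : ℕ) (t : ℝ), AEStronglyMeasurable (fun ξ => (w ξ : ℂ) *
      (Complex.I * ⟪ω, ξ⟫_ℝ) ^ j * Complex.exp (Complex.I * (⟪t • ω, ξ⟫_ℝ : ℂ))) volume := by
    intro j t
    have h1 : Continuous fun ξ : E => (Complex.I * ⟪ω, ξ⟫_ℝ) ^ j *
        Complex.exp (Complex.I * (⟪t • ω, ξ⟫_ℝ : ℂ)) := by fun_prop
    simp_rw [mul_assoc]
    exact ((Complex.measurable_ofReal.comp hw).mul h1.measurable).aestronglyMeasurable
  have hbd : ∀ (j : ℕ) (t : ℝ) (ξ : E), ‖(w ξ : ℂ) * (Complex.I * ⟪ω, ξ⟫_ℝ) ^ j *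
      Complex.exp (Complex.I * (⟪t • ω, ξ⟫_ℝ : ℂ))‖ ≤ ‖w ξ * ‖ξ‖ ^ j‖ := by
    intro j t ξ
    have h1 : |⟪ω, ξ⟫_ℝ| ≤ ‖ξ‖ := by simpa [hω] using abs_real_inner_le_norm ω ξ
    rw [norm_mul, mul_comm Complex.I (⟪t • ω, ξ⟫_ℝ : ℂ), Complex.norm_exp_ofReal_mul_I, mul_one,
      norm_mul, norm_mul, norm_pow, norm_pow, norm_mul, Complex.norm_I, one_mul,
      Complex.norm_real, Complex.norm_real, norm_norm]
    gcongr
    exact h1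
  refine (hasDerivAt_integral_of_dominated_loc_of_deriv_le (s := univ)
    (bound := fun ξ => ‖w ξ * ‖ξ‖ ^ (l + 1)‖) Filter.univ_mem
    (Filter.Eventually.of_forall (hmeas l)) ?_ (hmeas (l + 1) s)
    (Filter.Eventually.of_forall fun ξ t _ => hbd (l + 1) t ξ) (hint (l + 1)).norm
    (Filter.Eventually.of_forall fun ξ t _ => ?_)).2
  · exact (hint l).norm.mono' (hmeas l s) (Filter.Eventually.of_forall (hbd l s))
  · have h1 : ∀ t : ℝ, ((⟪t • ω, ξ⟫_ℝ : ℝ) : ℂ) = (t : ℂ) * (⟪ω, ξ⟫_ℝ : ℂ) := by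
      intro t; rw [inner_smul_left]; simp
    simp_rw [h1]
    have h2 : HasDerivAt (fun t : ℝ => Complex.I * ((t : ℂ) * (⟪ω, ξ⟫_ℝ : ℂ)))
        (Complex.I * (1 * (⟪ω, ξ⟫_ℝ : ℂ))) t :=
      ((Complex.ofRealCLM.hasDerivAt (x := t)).mul_const _).const_mul _
    exact (h2.cexp.const_mul ((w ξ : ℂ) * (Complex.I * ⟪ω, ξ⟫_ℝ) ^ l)).congr_deriv (by ring)

lemma iteratedDeriv_integral_mul_cexp {w : E → ℝ} (hw : Measurable w)
    (hint : ∀ l : ℕ, Integrable fun ξ => w ξ * ‖ξ‖ ^ l) {ω : E} (hω : ‖ω‖ = 1) (c : ℝ) (l : ℕ) :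
    iteratedDeriv l (fun s : ℝ => c * (∫ ξ, (w ξ : ℂ) *
        Complex.exp (Complex.I * (⟪s • ω, ξ⟫_ℝ : ℂ))).re) =
      fun s : ℝ => c * (∫ ξ, (w ξ : ℂ) * (Complex.I * ⟪ω, ξ⟫_ℝ) ^ l *
        Complex.exp (Complex.I * (⟪s • ω, ξ⟫_ℝ : ℂ))).re := by
  induction l with
  | zero => simp
  | succ l ih =>
    rw [iteratedDeriv_succ, ih]
    funext s
    exact ((Complex.reCLM.hasFDerivAt.comp_hasDerivAt s
      (hasDerivAt_integral_mul_cexp hw hint hω l s)).const_mul c).deriv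

end Derivative

/-! ### The spherical average -/

section Average

variable {N : ℕ} {σ : ℝ} {μ : Measure (Sph N)}

lemma pow_mul_exp_neg_le {a c C x : ℝ} (hc : c ≤ a) (hC : a ≤ C) (ha : 0 ≤ a) (hx : 0 ≤ x)
    (k : ℕ) : (a * x) ^ k * Real.exp (-(a * x)) ≤ (C * x) ^ k * Real.exp (-(c * x)) := by
  have := mul_nonneg (ha.trans hC) hx
  gcongr

lemma integrable_radialMult [Nontrivial (Eu N)] (hσ0 : 0 < σ) {a : ℝ} (ha : 0 < a) (k l : ℕ)
    {ω : Eu N} (hω : ‖ω‖ = 1) : Integrable (radialMult a σ k l ω) := by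
  refine (integrable_radial_rpow_mul_exp (E := Eu N) hσ0 ha a k l).mono' ?_
    (Filter.Eventually.of_forall fun ξ => ?_)
  · refine Measurable.aestronglyMeasurable ?_
    unfold radialMult
    fun_prop
  · have h1 : |⟪ω, ξ⟫_ℝ| ≤ ‖ξ‖ := by simpa [hω] using abs_real_inner_le_norm ω ξ
    rw [radialMult, norm_mul, norm_pow, norm_mul, Complex.norm_I, one_mul, Complex.norm_real,
      Complex.norm_real, Real.norm_of_nonneg (by positivity)]
    gcongr
    exact h1

lemma symb_le_and_le_of_bounds (hσ0 : 0 < σ) {C c : ℝ} (hC : ∀ ω : Sph N, symb N σ μ ω ≤ C)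
    (hc : ∀ ω : Sph N, c ≤ symb N σ μ ω) (ξ : Eu N) (hξ : ξ ≠ 0) :
    c * ‖ξ‖ ^ σ ≤ symb N σ μ ξ ∧ symb N σ μ ξ ≤ C * ‖ξ‖ ^ σ := by
  have hn : ‖ξ‖ ≠ 0 := norm_ne_zero_iff.2 hξ
  let ω : Sph N := ⟨‖ξ‖⁻¹ • ξ, by simp [norm_smul, hn]⟩
  have h1 : symb N σ μ ξ = symb N σ μ ω * ‖ξ‖ ^ σ := by
    rw [← symb_smul hσ0 (norm_nonneg ξ), smul_smul, mul_inv_cancel₀ hn, one_smul]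
  rw [h1]
  have := hC ω
  have := hc ω
  constructor <;> gcongr

variable [IsFiniteMeasure μ]

lemma integrable_symb_mul_norm_pow [Nontrivial (Eu N)] (hσ0 : 0 < σ) (hσ2 : σ < 2) {c : ℝ}
    (hc0 : 0 < c) (hc : ∀ ω : Sph N, c ≤ symb N σ μ ω) (k l : ℕ) :
    Integrable fun ξ : Eu N =>
      symb N σ μ ξ ^ k * Real.exp (-symb N σ μ ξ) * ‖ξ‖ ^ l := by
  have hm := measurable_symb (μ := μ) hσ0
  refine (integrable_radial_rpow_mul_exp (E := Eu N) hσ0 hc0 (μ.real univ * symbConst σ) k l).mono'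
    (Measurable.aestronglyMeasurable (by fun_prop)) ?_
  filter_upwards [compl_mem_ae_iff.2 (measure_singleton (0 : Eu N))] with ξ hξ
  have h1 := symb_le_and_le_of_bounds hσ0 (symb_le hσ0 hσ2) hc ξ hξ
  have h0 := symb_nonneg (μ := μ) hσ0 hσ2 ξ
  have h2 := h0.trans h1.2
  rw [Real.norm_of_nonneg (by positivity)]
  gcongr
  · exact h1.2
  · exact h1.1

/-- The spherical average of the directional derivatives of the inverse Fourier transform of
`m^k e^{-m}` is integrable, and the average equals an average of directional derivatives for radial
multipliers. -/
lemma integral_sphere_symb_eq_integral_radialMult [Nontrivial (Eu N)] (hσ0 : 0 < σ) (hσ2 : σ < 2)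
    {c : ℝ} (hc0 : 0 < c) (hc : ∀ ω : Sph N, c ≤ symb N σ μ ω) (k l : ℕ) (r : ℝ) :
    Integrable (fun θ : Sph N => ∫ ξ : Eu N,
        ((symb N σ μ ξ ^ k * Real.exp (-symb N σ μ ξ) : ℝ) : ℂ) *
        (Complex.I * ⟪(θ : Eu N), ξ⟫_ℝ) ^ l *
        Complex.exp (Complex.I * (⟪r • (θ : Eu N), ξ⟫_ℝ : ℂ))) (sphMeas N) ∧
    ∫ θ : Sph N, (∫ ξ : Eu N, ((symb N σ μ ξ ^ k * Real.exp (-symb N σ μ ξ) : ℝ) : ℂ) *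
        (Complex.I * ⟪(θ : Eu N), ξ⟫_ℝ) ^ l *
        Complex.exp (Complex.I * (⟪r • (θ : Eu N), ξ⟫_ℝ : ℂ))) ∂(sphMeas N) =
      ∫ ω : Sph N, (∫ ξ : Eu N, radialMult (symb N σ μ ω) σ k l (ω : Eu N) ξ *
        Complex.exp (Complex.I * (⟪r • (ω : Eu N), ξ⟫_ℝ : ℂ))) ∂(sphMeas N) := by
  let C := μ.real univ * symbConst σ
  let ρ := Measure.volumeIoiPow (Module.finrank ℝ (Eu N) - 1)
  let H : Sph N → Sph N → Ioi (0 : ℝ) → ℂ := fun θ ω s =>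
    (((symb N σ μ ω * (s : ℝ) ^ σ) ^ k * Real.exp (-(symb N σ μ ω * (s : ℝ) ^ σ)) : ℝ) : ℂ) *
      (Complex.I * ((s : ℝ) * ⟪(θ : Eu N), (ω : Eu N)⟫_ℝ : ℝ)) ^ l *
      Complex.exp (Complex.I * ((r * ((s : ℝ) * ⟪(θ : Eu N), (ω : Eu N)⟫_ℝ) : ℝ) : ℂ))
  have hm := measurable_symb (μ := μ) hσ0
  have hHmeas : Measurable fun q : Sph N × Sph N × Ioi (0 : ℝ) => H q.1 q.2.1 q.2.2 := by
    have h1 : Measurable fun q : Sph N × Sph N × Ioi (0 : ℝ) => symb N σ μ q.2.1 :=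
      hm.comp (by fun_prop)
    have h2 : Measurable fun q : Sph N × Sph N × Ioi (0 : ℝ) => ((q.2.2 : Ioi (0 : ℝ)) : ℝ) := by
      fun_prop
    have h3 : Measurable fun q : Sph N × Sph N × Ioi (0 : ℝ) =>
        ⟪(q.1 : Eu N), (q.2.1 : Eu N)⟫_ℝ :=
      Continuous.measurable (by fun_prop)
    fun_prop
  have hHint : Integrable (fun q : Sph N × Sph N × Ioi (0 : ℝ) => H q.1 q.2.1 q.2.2)
      ((sphMeas N).prod ((sphMeas N).prod ρ)) := by
    have hrad := integrable_polar_iff.2 (integrable_radial_rpow_mul_exp (E := Eu N) hσ0 hc0 C k l)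
    have hfin : IsFiniteMeasure (sphMeas N) := by unfold sphMeas; infer_instance
    refine Integrable.mono' (hrad.comp_snd (sphMeas N)) hHmeas.aestronglyMeasurable
      (Filter.Eventually.of_forall fun q => ?_)
    have hs : 0 < (q.2.2 : ℝ) := q.2.2.2
    have h0 := symb_nonneg (μ := μ) hσ0 hσ2 (q.2.1 : Eu N)
    have h1 : ‖(q.2.2 : ℝ) • (q.2.1 : Eu N)‖ = q.2.2 := by
      rw [norm_smul, norm_eq_of_mem_sphere, mul_one, Real.norm_of_nonneg hs.le]
    have h2 : |⟪(q.1 : Eu N), (q.2.1 : Eu N)⟫_ℝ| ≤ 1 := by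
      simpa using abs_real_inner_le_norm (q.1 : Eu N) (q.2.1 : Eu N)
    simp only [H]
    rw [h1, norm_mul, mul_comm Complex.I (((r * _ : ℝ)) : ℂ), Complex.norm_exp_ofReal_mul_I,
      mul_one, norm_mul, norm_pow, norm_mul, Complex.norm_I, one_mul, Complex.norm_real,
      Complex.norm_real, Real.norm_of_nonneg (by positivity), norm_mul,
      Real.norm_of_nonneg hs.le, Real.norm_eq_abs]
    have h3 := pow_mul_exp_neg_le (hc q.2.1) (symb_le hσ0 hσ2 q.2.1) h0
      (Real.rpow_nonneg hs.le σ) k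
    have h4 := (by positivity : (0 : ℝ) ≤ _).trans h3
    gcongr ?_ * ?_ ^ l
    nlinarith
  have hL : ∀ θ : Sph N, (∫ ξ : Eu N,
        ((symb N σ μ ξ ^ k * Real.exp (-symb N σ μ ξ) : ℝ) : ℂ) *
        (Complex.I * ⟪(θ : Eu N), ξ⟫_ℝ) ^ l *
        Complex.exp (Complex.I * (⟪r • (θ : Eu N), ξ⟫_ℝ : ℂ))) =
      ∫ p : Sph N × Ioi (0 : ℝ), H θ p.1 p.2 ∂((sphMeas N).prod ρ) := by
    intro θ
    rw [integral_polar]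
    refine integral_congr_ae (Filter.Eventually.of_forall fun p => ?_)
    simp only [H, inner_smul_left, inner_smul_right, symb_smul hσ0 (le_of_lt p.2.2),
      conj_trivial, mul_left_comm r]
  have hR : ∀ ω : Sph N, (∫ ξ : Eu N, radialMult (symb N σ μ ω) σ k l (ω : Eu N) ξ *
        Complex.exp (Complex.I * (⟪r • (ω : Eu N), ξ⟫_ℝ : ℂ))) =
      ∫ p : Sph N × Ioi (0 : ℝ), H p.1 ω p.2 ∂((sphMeas N).prod ρ) := by
    intro ω
    rw [integral_polar]
    refine integral_congr_ae (Filter.Eventually.of_forall fun p => ?_)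
    have h1 : ‖(p.2 : ℝ) • (p.1 : Eu N)‖ = p.2 := by
      rw [norm_smul, norm_eq_of_mem_sphere, mul_one, Real.norm_of_nonneg (le_of_lt p.2.2)]
    simp only [H, radialMult, h1, inner_smul_right, mul_left_comm r, real_inner_comm (p.1 : Eu N)]
  have hfin : IsFiniteMeasure (sphMeas N) := by unfold sphMeas; infer_instance
  simp_rw [hL, hR]
  exact ⟨hHint.integral_prod_left, integral_integral_prod_swap hHint⟩

end Average

/-- Averaged decay of radial derivatives of fractional derivatives of
the heat-kernel profile:
`|∫_{𝕊^{N−1}} ∂_r^l 𝓛^kΦ(rθ) dθ| ≤ C r^{−N−(1+(k−1)₊)σ−l}` for `r` large. -/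
theorem stmt4 (N : ℕ) (hN : 1 ≤ N) (σ : ℝ) (hσ0 : 0 < σ) (hσ2 : σ < 2)
    (μ : Measure (Sph N)) [IsFiniteMeasure μ]
    (lam : ℝ) (hlam : 0 < lam) (hell : Elliptic N σ μ lam)
    (k l : ℕ) :
    ∃ C > 0, ∃ R0 ≥ (1 : ℝ), ∀ r ≥ R0,
      |∫ θ : Sph N,
          iteratedDeriv l (fun s : ℝ => LkPhi N σ μ k (s • (θ : Eu N))) r ∂(sphMeas N)|
        ≤ C * r ^ (-(N : ℝ) - (1 + max ((k : ℝ) - 1) 0) * σ - l) := by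
  have : Nonempty (Fin N) := ⟨⟨0, hN⟩⟩
  have hfin : IsFiniteMeasure (sphMeas N) := by unfold sphMeas; infer_instance
  set c : ℝ := lam * symbConst σ
  set A : ℝ := μ.real univ * symbConst σ
  have hc0 : 0 < c := mul_pos hlam (symbConst_pos hσ0 hσ2)
  have hc : ∀ ω : Sph N, c ≤ symb N σ μ ω := le_symb_of_elliptic hσ0 hσ2 hell
  have hA : ∀ ω : Sph N, symb N σ μ ω ≤ A := symb_le hσ0 hσ2
  have hA0 : 0 ≤ A := mul_nonneg measureReal_nonneg (symbConst_pos hσ0 hσ2).le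
  obtain ⟨C, hC, hdecay⟩ := exists_norm_integral_radialMult_le (E := Eu N) hσ0 hσ2 k l
  rw [finrank_euclideanSpace_fin] at hdecay
  set b : ℝ := (2 * π) ^ (-(N : ℝ))
  have hb : 0 < b := by positivity
  set D : ℝ := b * (C * A ^ max k 1 * (sphMeas N).real univ)
  have hD : 0 ≤ D := by positivity
  refine ⟨D + 1, by positivity, 1, le_rfl, fun r hr => ?_⟩
  have hr0 : 0 < r := by linarith
  have hexp : -(N : ℝ) - (1 + max ((k : ℝ) - 1) 0) * σ - l =
      -(N : ℝ) - (σ * (max k 1 : ℕ) + l) := by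
    have : (1 : ℝ) + max ((k : ℝ) - 1) 0 = (max k 1 : ℕ) := by
      rw [← max_add_add_left]; simp
    rw [this]; ring
  rw [hexp]
  have hderiv : ∀ θ : Sph N,
      iteratedDeriv l (fun s : ℝ => LkPhi N σ μ k (s • (θ : Eu N))) r =
        b * (∫ ξ : Eu N, ((symb N σ μ ξ ^ k * Real.exp (-symb N σ μ ξ) : ℝ) : ℂ) *
          (Complex.I * ⟪(θ : Eu N), ξ⟫_ℝ) ^ l *
          Complex.exp (Complex.I * (⟪r • (θ : Eu N), ξ⟫_ℝ : ℂ))).re := by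
    intro θ
    have hm := measurable_symb (μ := μ) hσ0
    exact congrFun (iteratedDeriv_integral_mul_cexp
      (w := fun ξ => symb N σ μ ξ ^ k * Real.exp (-symb N σ μ ξ)) (by fun_prop)
      (fun j => integrable_symb_mul_norm_pow hσ0 hσ2 hc0 hc k j) (norm_eq_of_mem_sphere θ) b l) r
  simp_rw [hderiv]
  rw [integral_const_mul, abs_mul, abs_of_pos hb]
  obtain ⟨hXint, hX⟩ := integral_sphere_symb_eq_integral_radialMult hσ0 hσ2 hc0 hc k l r
  have hre := Complex.reCLM.integral_comp_comm hXint
  simp only [Complex.reCLM_apply] at hre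
  rw [hre, hX]
  have hbound : ∀ ω : Sph N, ‖∫ ξ : Eu N, radialMult (symb N σ μ ω) σ k l (ω : Eu N) ξ *
      Complex.exp (Complex.I * (⟪r • (ω : Eu N), ξ⟫_ℝ : ℂ))‖ ≤
      C * A ^ max k 1 * r ^ (-(N : ℝ) - (σ * (max k 1 : ℕ) + l)) := by
    intro ω
    have h0 := symb_nonneg (μ := μ) hσ0 hσ2 (ω : Eu N)
    have hω := norm_eq_of_mem_sphere ω
    refine (hdecay (symb N σ μ ω) h0 ω hω
      (integrable_radialMult hσ0 (hc0.trans_le (hc ω)) k l hω) r hr0).trans ?_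
    gcongr
    exact hA ω
  calc _ ≤ b * (C * A ^ max k 1 * r ^ (-(N : ℝ) - (σ * (max k 1 : ℕ) + l)) *
        (sphMeas N).real univ) := by
        refine mul_le_mul_of_nonneg_left ((Complex.abs_re_le_norm _).trans ?_) hb.le
        exact norm_integral_le_of_norm_le_const (Filter.Eventually.of_forall hbound)
    _ = D * r ^ (-(N : ℝ) - (σ * (max k 1 : ℕ) + l)) := by ring
    _ ≤ (D + 1) * r ^ (-(N : ℝ) - (σ * (max k 1 : ℕ) + l)) := by
        gcongr
        linarith
end
end

section
/- For every 0 < a < b, the function 𝓛P(x,t) = t^{−N/σ−1} (𝓛Φ)(x t^{−1/σ}) (which equals −∂_t P(x,t)) is absolutely integrable over B⁺_{a,b} = {(x,t) ∈ ℝ^N × ℝ : t > 0 and a² < |x|² + t^{2/σ} < b²}, and ∫_{B⁺_{a,b}} 𝓛P(x,t) dx dt = 0. -/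
open MeasureTheory Metric Real Set
open scoped InnerProductSpace ENNReal

noncomputable section

section TemperateGrowth

variable {Ω : Type*} [MeasurableSpace Ω] {P : Measure Ω}

lemma Function.HasTemperateGrowth.deriv_real {φ : ℝ → ℝ} (hφ : φ.HasTemperateGrowth) :
    (deriv φ).HasTemperateGrowth := by
  refine ⟨(contDiff_infty_iff_deriv.1 hφ.1).2, fun n ↦ ?_⟩
  obtain ⟨k, C, h⟩ := hφ.2 (n + 1)
  refine ⟨k, C, fun x ↦ ?_⟩
  have := h x
  rwa [norm_iteratedFDeriv_eq_norm_iteratedDeriv, iteratedDeriv_succ',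
    ← norm_iteratedFDeriv_eq_norm_iteratedDeriv] at this

lemma hasTemperateGrowth_cos : Function.HasTemperateGrowth Real.cos := by
  refine ⟨Real.contDiff_cos, fun n ↦ ⟨0, 1, fun x ↦ ?_⟩⟩
  rw [norm_iteratedFDeriv_eq_norm_iteratedDeriv]
  simpa using Real.abs_iteratedDeriv_cos_le_one n x

universe u
variable {E : Type u} [NormedAddCommGroup E] [InnerProductSpace ℝ E]

lemma Function.HasTemperateGrowth.exists_norm_comp_inner_le {φ : ℝ → ℝ}
    (hφ : φ.HasTemperateGrowth) (R : ℝ) :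
    ∃ (k : ℕ) (C : ℝ), 0 ≤ C ∧ ∀ v ξ : E, ‖v‖ ≤ R → ‖φ ⟪v, ξ⟫_ℝ‖ ≤ C * (1 + ‖ξ‖) ^ k := by
  obtain ⟨k, C, hC, h⟩ := hφ.norm_iteratedFDeriv_le_uniform 0
  refine ⟨k, C * (1 + |R|) ^ k, by positivity, fun v ξ hv ↦ ?_⟩
  have h1 := h 0 le_rfl ⟪v, ξ⟫_ℝ
  rw [norm_iteratedFDeriv_zero] at h1
  refine h1.trans ?_
  rw [mul_assoc, ← mul_pow]
  gcongr
  have h2 : ‖⟪v, ξ⟫_ℝ‖ ≤ |R| * ‖ξ‖ := (norm_inner_le_norm v ξ).trans (by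
    gcongr; exact hv.trans (le_abs_self R))
  nlinarith [abs_nonneg R, norm_nonneg ξ]

variable {v : Ω → E} {R : ℝ}

lemma hasFDerivAt_integral_comp_inner {F : Type u} [NormedAddCommGroup F] [NormedSpace ℝ F]
    (hv : AEStronglyMeasurable v P) (hR : ∀ᵐ ω ∂P, ‖v ω‖ ≤ R)
    {φ : ℝ → ℝ} (hφ : φ.HasTemperateGrowth) {T : Ω → F} (hT : Integrable T P) (ξ : E) :
    HasFDerivAt (fun ξ ↦ ∫ ω, φ ⟪v ω, ξ⟫_ℝ • T ω ∂P)
      (∫ ω, deriv φ ⟪v ω, ξ⟫_ℝ • (innerSL ℝ (v ω)).smulRight (T ω) ∂P) ξ := by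
  have hmeas : ∀ ψ : ℝ → ℝ, Continuous ψ → ∀ ξ : E,
      AEStronglyMeasurable (fun ω ↦ ψ ⟪v ω, ξ⟫_ℝ) P := fun ψ hψ ξ ↦
    hψ.comp_aestronglyMeasurable (hv.inner aestronglyMeasurable_const)
  have hφc := hφ.1.continuous
  have hφ'c := hφ.deriv_real.1.continuous
  obtain ⟨k, C, hC, hb⟩ := hφ.exists_norm_comp_inner_le (E := E) R
  obtain ⟨k', C', hC', hb'⟩ := hφ.deriv_real.exists_norm_comp_inner_le (E := E) R
  have hsm : AEStronglyMeasurable (fun ω ↦ (innerSL ℝ (v ω)).smulRight (T ω)) P := by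
    have h1 : AEStronglyMeasurable (fun ω ↦ innerSL ℝ (v ω)) P :=
      (innerSL ℝ (E := E)).continuous.comp_aestronglyMeasurable hv
    exact (ContinuousLinearMap.smulRightL ℝ E F).aestronglyMeasurable_comp₂ h1 hT.1
  refine hasFDerivAt_integral_of_dominated_of_fderiv_le (𝕜 := ℝ)
    (F' := fun ξ ω ↦ deriv φ ⟪v ω, ξ⟫_ℝ • (innerSL ℝ (v ω)).smulRight (T ω))
    (bound := fun ω ↦ C' * (2 + ‖ξ‖) ^ k' * R * ‖T ω‖) (Metric.ball_mem_nhds ξ one_pos)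
    (.of_forall fun x ↦ (hmeas φ hφc x).smul hT.1) ?_ ((hmeas _ hφ'c ξ).smul hsm) ?_
    (hT.norm.const_mul _) (.of_forall fun ω x _ ↦ ?_)
  · refine hT.bdd_smul (C * (1 + ‖ξ‖) ^ k) (hmeas φ hφc ξ) ?_
    filter_upwards [hR] with ω hω using hb _ _ hω
  · filter_upwards [hR] with ω hω x hx
    have hx' : ‖x‖ ≤ 1 + ‖ξ‖ := by
      have := norm_sub_norm_le x ξ
      have := mem_ball_iff_norm.1 hx
      linarith
    rw [norm_smul, ContinuousLinearMap.norm_smulRight_apply, innerSL_apply_norm, ← mul_assoc]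
    have hR0 : 0 ≤ R := (norm_nonneg _).trans hω
    gcongr
    refine (hb' _ _ hω).trans (mul_le_mul_of_nonneg_left ?_ hC')
    exact pow_le_pow_left₀ (by positivity) (by linarith) _
  · have h1 : HasFDerivAt (fun x : E ↦ ⟪v ω, x⟫_ℝ) (innerSL ℝ (v ω)) x :=
      (innerSL ℝ (v ω)).hasFDerivAt
    have h2 : HasDerivAt φ (deriv φ ⟪v ω, x⟫_ℝ) ⟪v ω, x⟫_ℝ :=
      (hφ.1.differentiable (by simp)).differentiableAt.hasDerivAt
    have h3 := (h2.comp_hasFDerivAt x h1).smul_const (T ω)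
    have h4 : deriv φ ⟪v ω, x⟫_ℝ • (innerSL ℝ (v ω)).smulRight (T ω) =
        (deriv φ ⟪v ω, x⟫_ℝ • innerSL ℝ (v ω)).smulRight (T ω) := by
      ext y
      simp [mul_smul]
    rw [h4]
    exact h3

lemma contDiff_integral_comp_inner (hv : AEStronglyMeasurable v P) (hR : ∀ᵐ ω ∂P, ‖v ω‖ ≤ R)
    (n : ℕ) : ∀ {F : Type u} [NormedAddCommGroup F] [NormedSpace ℝ F]
    {φ : ℝ → ℝ} (_ : φ.HasTemperateGrowth) {T : Ω → F} (_ : Integrable T P),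
    ContDiff ℝ n (fun ξ ↦ ∫ ω, φ ⟪v ω, ξ⟫_ℝ • T ω ∂P) ∧ ∃ (k : ℕ) (C : ℝ), ∀ ξ,
      ‖iteratedFDeriv ℝ n (fun ξ ↦ ∫ ω, φ ⟪v ω, ξ⟫_ℝ • T ω ∂P) ξ‖ ≤ C * (1 + ‖ξ‖) ^ k := by
  induction n with
  | zero =>
    intro F _ _ φ hφ T hT
    refine ⟨contDiff_zero.2 <| continuous_iff_continuousAt.2 fun ξ ↦
      (hasFDerivAt_integral_comp_inner hv hR hφ hT ξ).continuousAt, ?_⟩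
    obtain ⟨k, C, hC, hb⟩ := hφ.exists_norm_comp_inner_le (E := E) R
    refine ⟨k, C * ∫ ω, ‖T ω‖ ∂P, fun ξ ↦ ?_⟩
    rw [norm_iteratedFDeriv_zero, mul_right_comm, ← integral_const_mul]
    refine norm_integral_le_of_norm_le (hT.norm.const_mul _) ?_
    filter_upwards [hR] with ω hω
    rw [norm_smul]
    gcongr
    exact hb _ _ hω
  | succ n ih =>
    intro F _ _ φ hφ T hT
    have hd := hasFDerivAt_integral_comp_inner hv hR hφ hT
    have hT' : Integrable (fun ω ↦ (innerSL ℝ (v ω)).smulRight (T ω)) P := by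
      have h1 : AEStronglyMeasurable (fun ω ↦ innerSL ℝ (v ω)) P :=
        (innerSL ℝ (E := E)).continuous.comp_aestronglyMeasurable hv
      refine (hT.norm.const_mul R).mono'
        ((ContinuousLinearMap.smulRightL ℝ E F).aestronglyMeasurable_comp₂ h1 hT.1) ?_
      filter_upwards [hR] with ω hω
      rw [ContinuousLinearMap.norm_smulRight_apply, innerSL_apply_norm]
      gcongr
    have hfd : fderiv ℝ (fun ξ ↦ ∫ ω, φ ⟪v ω, ξ⟫_ℝ • T ω ∂P) =
        fun ξ ↦ ∫ ω, deriv φ ⟪v ω, ξ⟫_ℝ • (innerSL ℝ (v ω)).smulRight (T ω) ∂P :=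
      funext fun ξ ↦ (hd ξ).fderiv
    obtain ⟨h1, k, C, h2⟩ := ih hφ.deriv_real hT'
    refine ⟨?_, k, C, fun ξ ↦ ?_⟩
    · push_cast
      refine contDiff_succ_iff_fderiv.2 ⟨fun ξ ↦ (hd ξ).differentiableAt, by simp, ?_⟩
      rw [hfd]
      exact h1
    · rw [← norm_iteratedFDeriv_fderiv, hfd]
      exact h2 ξ

/-- Superpositions `ξ ↦ ∫ φ(⟪v ω, ξ⟫) T(ω) dP(ω)` of ridge functions with bounded directions
inherit temperate growth from `φ`. -/
lemma Function.HasTemperateGrowth.integral_comp_inner {F : Type u} [NormedAddCommGroup F]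
    [NormedSpace ℝ F] (hv : AEStronglyMeasurable v P) (hR : ∀ᵐ ω ∂P, ‖v ω‖ ≤ R)
    {φ : ℝ → ℝ} (hφ : φ.HasTemperateGrowth) {T : Ω → F} (hT : Integrable T P) :
    Function.HasTemperateGrowth (fun ξ ↦ ∫ ω, φ ⟪v ω, ξ⟫_ℝ • T ω ∂P) :=
  ⟨contDiff_infty.2 fun n ↦ (contDiff_integral_comp_inner hv hR n hφ hT).1,
    fun n ↦ (contDiff_integral_comp_inner hv hR n hφ hT).2⟩

end TemperateGrowth

section Schwartz

lemma exists_one_add_pow_mul_exp_neg_rpow_le {c σ : ℝ} (hc : 0 < c) (hσ : 0 < σ) (q : ℕ) :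
    ∃ B : ℝ, ∀ s : ℝ, 0 ≤ s → (1 + s) ^ q * Real.exp (-(c * s ^ σ)) ≤ B := by
  obtain ⟨M, hM⟩ := exists_nat_ge ((q : ℝ) / σ)
  have hM' : (q : ℝ) ≤ σ * M := by rwa [div_le_iff₀' hσ] at hM
  refine ⟨2 ^ q * (1 + M.factorial / c ^ M), fun s hs ↦ ?_⟩
  have h1 : (1 + s) ^ q ≤ 2 ^ q * (1 + (s ^ σ) ^ M) := by
    rcases le_total s 1 with h | h
    · calc (1 + s) ^ q ≤ 2 ^ q := by gcongr; linarith
        _ ≤ _ := le_mul_of_one_le_right (by positivity) (by simp; positivity)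
    · calc (1 + s) ^ q ≤ (2 * s) ^ q := by gcongr; linarith
        _ = 2 ^ q * s ^ (q : ℝ) := by rw [mul_pow, Real.rpow_natCast]
        _ ≤ 2 ^ q * s ^ (σ * M) := by gcongr
        _ = 2 ^ q * (s ^ σ) ^ M := by rw [Real.rpow_mul hs, Real.rpow_natCast]
        _ ≤ _ := by gcongr; linarith
  have h2 : (s ^ σ) ^ M * Real.exp (-(c * s ^ σ)) ≤ M.factorial / c ^ M := by
    have := Real.pow_div_factorial_le_exp (c * s ^ σ) (by positivity) M
    rw [Real.exp_neg, ← div_eq_mul_inv, div_le_div_iff₀ (by positivity) (by positivity)]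
    rw [div_le_iff₀ (by positivity), mul_pow] at this
    linarith
  have h3 : Real.exp (-(c * s ^ σ)) ≤ 1 := Real.exp_le_one_iff.2 (by
    have : 0 ≤ c * s ^ σ := by positivity
    linarith)
  calc (1 + s) ^ q * Real.exp (-(c * s ^ σ))
      ≤ 2 ^ q * (1 + (s ^ σ) ^ M) * Real.exp (-(c * s ^ σ)) := by gcongr
    _ = 2 ^ q * (Real.exp (-(c * s ^ σ)) + (s ^ σ) ^ M * Real.exp (-(c * s ^ σ))) := by ring
    _ ≤ _ := by gcongr

variable {E : Type*} [NormedAddCommGroup E] [NormedSpace ℝ E]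

/-- `h e^{-f}` is a Schwartz function when `f`, `h` have temperate growth and `f` is bounded below
by a positive power of the norm. -/
lemma exists_schwartzMap_mul_exp_neg {f h : E → ℝ} (hf : f.HasTemperateGrowth)
    (hh : h.HasTemperateGrowth) {c K σ : ℝ} (hc : 0 < c) (hσ : 0 < σ)
    (hlow : ∀ x, c * ‖x‖ ^ σ - K ≤ f x) :
    ∃ S : SchwartzMap E ℂ, ∀ x, S x = ((h x * Real.exp (-f x) : ℝ) : ℂ) := by
  set g : ℝ → ℝ := fun s ↦ Real.exp (-s) with hg
  have hgc : ContDiff ℝ (⊤ : ℕ∞) g := Real.contDiff_exp.comp contDiff_neg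
  have hgn : ∀ (n : ℕ) (s : ℝ), ‖iteratedFDeriv ℝ n g s‖ = Real.exp (-s) := fun n s ↦ by
    rw [norm_iteratedFDeriv_eq_norm_iteratedDeriv, hg, iteratedDeriv_comp_neg]
    simp [iteratedDeriv_eq_iterate]
  have hS : ∀ k n : ℕ, ∃ C : ℝ, ∀ x, ‖x‖ ^ k * ‖iteratedFDeriv ℝ n (g ∘ f) x‖ ≤ C := by
    intro k n
    obtain ⟨p, C, hC, hb⟩ := hf.norm_iteratedFDeriv_le_uniform n
    obtain ⟨B, hB⟩ := exists_one_add_pow_mul_exp_neg_rpow_le hc hσ (k + p * n)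
    refine ⟨n.factorial * (1 + C) ^ n * Real.exp K * B, fun x ↦ ?_⟩
    have h1 : 1 ≤ (1 + C) * (1 + ‖x‖) ^ p := by
      have h2 : 1 ≤ (1 + ‖x‖) ^ p := one_le_pow₀ (by simp)
      nlinarith
    have h3 := norm_iteratedFDeriv_comp_le (𝕜 := ℝ) hgc hf.1 (n := n) (by exact_mod_cast le_top) x
      (C := Real.exp (-f x)) (D := (1 + C) * (1 + ‖x‖) ^ p) (fun i _ ↦ (hgn i _).le)
      (fun i hi hin ↦ by
        calc _ ≤ C * (1 + ‖x‖) ^ p := hb i hin x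
          _ ≤ (1 + C) * (1 + ‖x‖) ^ p := by gcongr; linarith
          _ ≤ _ := le_self_pow₀ h1 (by omega))
    have h4 : Real.exp (-f x) ≤ Real.exp K * Real.exp (-(c * ‖x‖ ^ σ)) := by
      rw [← Real.exp_add]
      exact Real.exp_le_exp.2 (by linarith [hlow x])
    calc ‖x‖ ^ k * ‖iteratedFDeriv ℝ n (g ∘ f) x‖
        ≤ (1 + ‖x‖) ^ k * (n.factorial * (Real.exp K * Real.exp (-(c * ‖x‖ ^ σ))) *
            ((1 + C) * (1 + ‖x‖) ^ p) ^ n) := by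
          gcongr
          · linarith
          · exact h3.trans (by gcongr)
      _ = n.factorial * (1 + C) ^ n * Real.exp K *
            ((1 + ‖x‖) ^ (k + p * n) * Real.exp (-(c * ‖x‖ ^ σ))) := by
          rw [mul_pow, ← pow_mul, pow_add]
          ring
      _ ≤ _ := by
          gcongr
          exact hB _ (norm_nonneg x)
  let S : SchwartzMap E ℝ := ⟨g ∘ f, hgc.comp hf.1, hS⟩
  refine ⟨SchwartzMap.postcompCLM Complex.ofRealCLM (SchwartzMap.smulLeftCLM ℝ h S), fun x ↦ ?_⟩
  rw [SchwartzMap.postcompCLM_apply, SchwartzMap.smulLeftCLM_apply_apply hh]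
  rfl

end Schwartz

section InverseFourier

variable {E : Type*} [NormedAddCommGroup E] [InnerProductSpace ℝ E] [FiniteDimensional ℝ E]
  [MeasurableSpace E] [BorelSpace E]

/-- The inverse Fourier integral `x ↦ ∫ g(ξ) e^{i⟪x, ξ⟫} dξ`, without normalising constant. -/
def invFourierInt (g : E → ℂ) (x : E) : ℂ :=
  ∫ ξ : E, g ξ * Complex.exp (Complex.I * (⟪x, ξ⟫_ℝ : ℂ))

lemma norm_exp_I_mul_ofReal (s : ℝ) : ‖Complex.exp (Complex.I * (s : ℂ))‖ = 1 := by
  rw [mul_comm, Complex.norm_exp_ofReal_mul_I]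

lemma integrable_mul_exp_inner {g : E → ℂ} (hg : Integrable g) (x : E) :
    Integrable (fun ξ : E ↦ g ξ * Complex.exp (Complex.I * (⟪x, ξ⟫_ℝ : ℂ))) :=
  hg.mul_bdd (c := 1) (by fun_prop) (.of_forall fun ξ ↦ (norm_exp_I_mul_ofReal _).le)

lemma continuous_invFourierInt {g : E → ℂ} (hg : Integrable g) :
    Continuous (invFourierInt g) := by
  refine continuous_of_dominated (bound := fun ξ ↦ ‖g ξ‖)
    (fun x ↦ (integrable_mul_exp_inner hg x).1) (fun x ↦ .of_forall fun ξ ↦ ?_) hg.norm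
    (.of_forall fun ξ ↦ by fun_prop)
  rw [norm_mul, norm_exp_I_mul_ofReal, mul_one]

lemma invFourierInt_eq_fourierInv (g : E → ℂ) (x : E) :
    invFourierInt g ((2 * π) • x) = FourierTransformInv.fourierInv g x := by
  rw [Real.fourierInv_eq', invFourierInt]
  congr 1 with ξ
  rw [smul_eq_mul, mul_comm, real_inner_smul_left, real_inner_comm, mul_comm Complex.I]

lemma integrable_invFourierInt_schwartzMap (S : SchwartzMap E ℂ) :
    Integrable (invFourierInt S) := by
  rw [← integrable_comp_smul_iff volume _ (R := 2 * π) (by positivity)]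
  simp_rw [invFourierInt_eq_fourierInv]
  have := SchwartzMap.integrable (μ := volume) (FourierTransformInv.fourierInv S : SchwartzMap E ℂ)
  rwa [SchwartzMap.fourierInv_coe] at this

/-- The Fourier inversion formula at the origin. -/
lemma integral_invFourierInt {g : E → ℂ} (hc : Continuous g) (hg : Integrable g)
    (hG : Integrable (invFourierInt g)) :
    ∫ x, invFourierInt g x = |((2 * π) ^ Module.finrank ℝ E)| • g 0 := by
  have h1 : Integrable (FourierTransformInv.fourierInv g) := by
    rw [← integrable_comp_smul_iff volume _ (R := 2 * π) (by positivity)] at hG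
    simpa only [invFourierInt_eq_fourierInv] using hG
  have h2 : Integrable (FourierTransform.fourier g) := by
    refine h1.comp_neg.congr (.of_forall fun x ↦ ?_)
    simp only [Real.fourierInv_eq_fourier_neg, neg_neg]
  have h3 := congrFun (hc.fourier_fourierInv_eq hg h2) 0
  rw [Real.fourier_eq'] at h3
  simp only [inner_zero_right, mul_zero, Complex.ofReal_zero, zero_mul, Complex.exp_zero,
    one_smul] at h3
  rw [← h3]
  simp_rw [← invFourierInt_eq_fourierInv]
  rw [Measure.integral_comp_smul, smul_smul, abs_inv, mul_inv_cancel₀ (by positivity), one_smul]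

/-- `φ` is bounded by `K` and multiplication by `φ` acts on the functions with integrable inverse
Fourier transform, with norm at most `K`. -/
structure IsFourierMultiplier (φ : E → ℝ) (K : ℝ) : Prop where
  continuous : Continuous φ
  norm_le : ∀ ξ, ‖φ ξ‖ ≤ K
  integrable : ∀ g : E → ℂ, Integrable g → Integrable (invFourierInt g) →
    Integrable (invFourierInt fun ξ ↦ g ξ * φ ξ)
  integral_norm_le : ∀ g : E → ℂ, Integrable g → Integrable (invFourierInt g) →
    ∫ x, ‖invFourierInt (fun ξ ↦ g ξ * φ ξ) x‖ ≤ K * ∫ x, ‖invFourierInt g x‖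

lemma IsFourierMultiplier.integrable_mul {φ : E → ℝ} {K : ℝ} (hφ : IsFourierMultiplier φ K)
    {g : E → ℂ} (hg : Integrable g) : Integrable fun ξ ↦ g ξ * φ ξ :=
  hg.mul_bdd (c := K) (Complex.continuous_ofReal.comp hφ.continuous).aestronglyMeasurable
    (.of_forall fun ξ ↦ by simpa using hφ.norm_le ξ)

/-- The cosine transform of a finite measure (here with density `T` and pushed forward by `v`)
is a multiplier: it acts by convolution. -/
lemma isFourierMultiplier_integral_cos {Ω : Type*} [MeasurableSpace Ω] {P : Measure Ω} [SFinite P]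
    {v : Ω → E} (hv : Measurable v) {T : Ω → ℝ} (hT : Integrable T P) :
    IsFourierMultiplier (fun ξ ↦ ∫ ω, Real.cos ⟪v ω, ξ⟫_ℝ * T ω ∂P) (∫ ω, ‖T ω‖ ∂P) := by
  have hcos : ∀ ξ, AEStronglyMeasurable (fun ω ↦ Real.cos ⟪v ω, ξ⟫_ℝ) P := fun ξ ↦
    (Real.measurable_cos.comp (hv.inner_const)).aestronglyMeasurable
  have hbd : ∀ ξ ω, ‖Real.cos ⟪v ω, ξ⟫_ℝ * T ω‖ ≤ ‖T ω‖ := fun ξ ω ↦ by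
    rw [norm_mul]
    exact mul_le_of_le_one_left (norm_nonneg _) (Real.abs_cos_le_one _)
  set φ : E → ℝ := fun ξ ↦ ∫ ω, Real.cos ⟪v ω, ξ⟫_ℝ * T ω ∂P with hφ
  have key : ∀ g : E → ℂ, Integrable g → ∀ x, invFourierInt (fun ξ ↦ g ξ * φ ξ) x =
      ∫ ω, (T ω : ℂ) * ((invFourierInt g (x + v ω) + invFourierInt g (x - v ω)) / 2) ∂P := by
    intro g hg x
    have hint : Integrable (fun p : E × Ω ↦ g p.1 * (T p.2 : ℂ) *
        (Complex.exp (Complex.I * (⟪x, p.1⟫_ℝ : ℂ)) * (Real.cos ⟪v p.2, p.1⟫_ℝ : ℂ)))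
        (volume.prod P) := by
      refine (hg.mul_prod hT.ofReal).mul_bdd (c := 1) ?_ (.of_forall fun p ↦ ?_)
      · refine Measurable.aestronglyMeasurable ?_
        have : Measurable fun p : E × Ω ↦ v p.2 := hv.comp measurable_snd
        fun_prop
      · rw [norm_mul, norm_exp_I_mul_ofReal, one_mul, Complex.norm_real]
        exact Real.abs_cos_le_one _
    calc invFourierInt (fun ξ ↦ g ξ * φ ξ) x
        = ∫ ξ, ∫ ω, g ξ * (T ω : ℂ) *
            (Complex.exp (Complex.I * (⟪x, ξ⟫_ℝ : ℂ)) * (Real.cos ⟪v ω, ξ⟫_ℝ : ℂ)) ∂P := by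
          rw [invFourierInt]
          congr 1 with ξ
          rw [hφ, ← integral_complex_ofReal, mul_right_comm, ← integral_const_mul]
          congr 1 with ω
          push_cast
          ring
      _ = ∫ ω, (∫ ξ, g ξ * (T ω : ℂ) *
            (Complex.exp (Complex.I * (⟪x, ξ⟫_ℝ : ℂ)) * (Real.cos ⟪v ω, ξ⟫_ℝ : ℂ))) ∂P :=
          integral_integral_swap hint
      _ = _ := by
          congr 1 with ω
          rw [invFourierInt, invFourierInt, ← integral_add (integrable_mul_exp_inner hg _)
            (integrable_mul_exp_inner hg _), ← integral_div, ← integral_const_mul]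
          congr 1 with ξ
          rw [inner_add_left, inner_sub_left, Complex.ofReal_cos, Complex.cos]
          push_cast
          rw [mul_add, mul_sub, sub_eq_add_neg, Complex.exp_add, Complex.exp_add]
          ring_nf
  have hprod : ∀ g : E → ℂ, Integrable g → Integrable (invFourierInt g) →
      Integrable (fun p : Ω × E ↦ (T p.1 : ℂ) *
        ((invFourierInt g (p.2 + v p.1) + invFourierInt g (p.2 - v p.1)) / 2)) (P.prod volume) ∧
      ∀ ω, ∫ x, ‖(T ω : ℂ) * ((invFourierInt g (x + v ω) + invFourierInt g (x - v ω)) / 2)‖ ≤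
        ‖T ω‖ * ∫ x, ‖invFourierInt g x‖ := by
    intro g hg hG
    have hGm := (continuous_invFourierInt hg).measurable
    have hslice : ∀ ω, Integrable fun x ↦
        (T ω : ℂ) * ((invFourierInt g (x + v ω) + invFourierInt g (x - v ω)) / 2) := fun ω ↦
      (((hG.comp_add_right _).add (hG.comp_sub_right _)).div_const _).const_mul _
    have hle : ∀ ω, ∫ x, ‖(T ω : ℂ) *
        ((invFourierInt g (x + v ω) + invFourierInt g (x - v ω)) / 2)‖ ≤
        ‖T ω‖ * ∫ x, ‖invFourierInt g x‖ := fun ω ↦ by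
      calc ∫ x, ‖(T ω : ℂ) * ((invFourierInt g (x + v ω) + invFourierInt g (x - v ω)) / 2)‖
          ≤ ∫ x, ‖T ω‖ * ((‖invFourierInt g (x + v ω)‖ + ‖invFourierInt g (x - v ω)‖) / 2) := by
            refine integral_mono (hslice ω).norm ((((hG.comp_add_right _).norm.add
              (hG.comp_sub_right _).norm).div_const _).const_mul _) fun x ↦ ?_
            simp only [norm_mul, norm_div, Complex.norm_real, RCLike.norm_ofNat]
            gcongr
            exact norm_add_le _ _
        _ = _ := by
            rw [integral_const_mul, integral_div, integral_add (hG.comp_add_right _).norm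
              (hG.comp_sub_right _).norm,
              integral_add_right_eq_self (fun x ↦ ‖invFourierInt g x‖),
              integral_sub_right_eq_self (fun x ↦ ‖invFourierInt g x‖)]
            ring
    have hmeas : AEStronglyMeasurable (fun p : Ω × E ↦ (T p.1 : ℂ) *
        ((invFourierInt g (p.2 + v p.1) + invFourierInt g (p.2 - v p.1)) / 2))
        (P.prod volume) := by
      refine AEStronglyMeasurable.mul ?_ (Measurable.aestronglyMeasurable ?_)
      · exact hT.ofReal.1.comp_fst
      · have : Measurable fun p : Ω × E ↦ v p.1 := hv.comp measurable_fst
        exact ((hGm.comp (measurable_snd.add this)).add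
          (hGm.comp (measurable_snd.sub this))).div_const _
    refine ⟨(integrable_prod_iff hmeas).2 ⟨.of_forall hslice, ?_⟩, hle⟩
    refine (hT.norm.mul_const (∫ x, ‖invFourierInt g x‖)).mono' hmeas.norm.integral_prod_right'
      (.of_forall fun ω ↦ ?_)
    rw [Real.norm_of_nonneg (by positivity)]
    exact hle ω
  refine ⟨?_, fun ξ ↦ ?_, fun g hg hG ↦ ?_, fun g hg hG ↦ ?_⟩
  · exact continuous_of_dominated (bound := fun ω ↦ ‖T ω‖) (fun ξ ↦ (hcos ξ).mul hT.1)
      (fun ξ ↦ .of_forall (hbd ξ)) hT.norm (.of_forall fun ω ↦ by fun_prop)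
  · exact norm_integral_le_of_norm_le hT.norm (.of_forall (hbd ξ))
  · refine (hprod g hg hG).1.integral_prod_right.congr (.of_forall fun x ↦ ?_)
    exact (key g hg x).symm
  · obtain ⟨h1, h2⟩ := hprod g hg hG
    calc ∫ x, ‖invFourierInt (fun ξ ↦ g ξ * φ ξ) x‖
        ≤ ∫ x, ∫ ω, ‖(T ω : ℂ) *
            ((invFourierInt g (x + v ω) + invFourierInt g (x - v ω)) / 2)‖ ∂P := by
          refine integral_mono_of_nonneg (.of_forall fun x ↦ norm_nonneg _)
            h1.norm.integral_prod_right (.of_forall fun x ↦ ?_)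
          simp only [key g hg x]
          exact norm_integral_le_integral_norm _
      _ = ∫ ω, (∫ x, ‖(T ω : ℂ) *
            ((invFourierInt g (x + v ω) + invFourierInt g (x - v ω)) / 2)‖) ∂P :=
          (integral_integral_swap h1.norm).symm
      _ ≤ ∫ ω, ‖T ω‖ * (∫ x, ‖invFourierInt g x‖) ∂P :=
          integral_mono h1.norm.integral_prod_left (hT.norm.mul_const _) h2
      _ = _ := integral_mul_const _ _

lemma IsFourierMultiplier.integrable_invFourierInt_mul_exp {φ : E → ℝ} {K : ℝ}
    (hφ : IsFourierMultiplier φ K) {g : E → ℂ} (hg : Integrable g)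
    (hG : Integrable (invFourierInt g)) :
    Integrable (invFourierInt fun ξ ↦ g ξ * (Real.exp (φ ξ) : ℂ)) := by
  have hK : 0 ≤ K := (norm_nonneg _).trans (hφ.norm_le 0)
  have hpow : ∀ n : ℕ, Integrable (fun ξ ↦ g ξ * (φ ξ : ℂ) ^ n) ∧
      Integrable (invFourierInt fun ξ ↦ g ξ * (φ ξ : ℂ) ^ n) ∧
      ∫ x, ‖invFourierInt (fun ξ ↦ g ξ * (φ ξ : ℂ) ^ n) x‖ ≤
        K ^ n * ∫ x, ‖invFourierInt g x‖ := by
    intro n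
    induction n with
    | zero => simpa using ⟨hg, hG⟩
    | succ n ih =>
      obtain ⟨h1, h2, h3⟩ := ih
      simp only [pow_succ, ← mul_assoc]
      refine ⟨hφ.integrable_mul h1, hφ.integrable _ h1 h2,
        (hφ.integral_norm_le _ h1 h2).trans ?_⟩
      calc _ ≤ K * (K ^ n * ∫ x, ‖invFourierInt g x‖) := by gcongr
        _ = _ := by ring
  have hsum : Summable fun n : ℕ ↦ K ^ n / n.factorial := Real.summable_pow_div_factorial K
  have hexp : ∀ x, HasSum
      (fun n : ℕ ↦ invFourierInt (fun ξ ↦ g ξ * (φ ξ : ℂ) ^ n) x / n.factorial)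
      (invFourierInt (fun ξ ↦ g ξ * (Real.exp (φ ξ) : ℂ)) x) := by
    intro x
    have h1 := hasSum_integral_of_summable_integral_norm (μ := volume) (F := fun (n : ℕ) ξ ↦
      g ξ * (φ ξ : ℂ) ^ n * Complex.exp (Complex.I * (⟪x, ξ⟫_ℝ : ℂ)) / n.factorial)
      (fun n ↦ (integrable_mul_exp_inner (hpow n).1 x).div_const _) ?_
    · convert! h1 using 1
      · ext n
        rw [integral_div, invFourierInt]
      · rw [invFourierInt]
        congr 1 with ξ
        have h2 : HasSum (fun n : ℕ ↦ (φ ξ : ℂ) ^ n / n.factorial) (Complex.exp (φ ξ)) := by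
          rw [Complex.exp_eq_exp_ℂ]
          exact NormedSpace.expSeries_div_hasSum_exp (φ ξ : ℂ)
        rw [Complex.ofReal_exp, ← ((h2.mul_left (g ξ)).mul_right
          (Complex.exp (Complex.I * (⟪x, ξ⟫_ℝ : ℂ)))).tsum_eq]
        congr 1 with n
        ring
    · refine Summable.of_nonneg_of_le (fun n ↦ by positivity) (fun n ↦ ?_)
        (hsum.mul_right (∫ ξ, ‖g ξ‖))
      rw [← integral_const_mul]
      refine integral_mono ((integrable_mul_exp_inner (hpow n).1 x).div_const _).norm
        (hg.norm.const_mul _) fun ξ ↦ ?_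
      simp only [norm_div, norm_mul, norm_pow, norm_exp_I_mul_ofReal, Complex.norm_real,
        Complex.norm_natCast, mul_one]
      rw [mul_div_assoc, mul_comm]
      gcongr
      exact hφ.norm_le ξ
  have hbdd : ∀ ξ, ‖(Real.exp (φ ξ) : ℂ)‖ ≤ Real.exp K := fun ξ ↦ by
    rw [Complex.norm_real, Real.norm_of_nonneg (Real.exp_pos _).le]
    exact Real.exp_le_exp.2 ((le_abs_self _).trans (hφ.norm_le ξ))
  have hint : Integrable fun ξ ↦ g ξ * (Real.exp (φ ξ) : ℂ) :=
    hg.mul_bdd (c := Real.exp K) (Complex.continuous_ofReal.comp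
      (Real.continuous_exp.comp hφ.continuous)).aestronglyMeasurable (.of_forall hbdd)
  refine ⟨(continuous_invFourierInt hint).aestronglyMeasurable, ?_⟩
  have hterm : ∀ n : ℕ, ∫⁻ x, ‖invFourierInt (fun ξ ↦ g ξ * (φ ξ : ℂ) ^ n) x / n.factorial‖ₑ ≤
      ENNReal.ofReal (K ^ n / n.factorial * ∫ x, ‖invFourierInt g x‖) := fun n ↦ by
    rw [← ofReal_integral_norm_eq_lintegral_enorm ((hpow n).2.1.div_const _)]
    refine ENNReal.ofReal_le_ofReal ?_
    simp only [norm_div, Complex.norm_natCast]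
    rw [integral_div, div_mul_eq_mul_div]
    gcongr
    exact (hpow n).2.2
  calc ∫⁻ x, ‖invFourierInt (fun ξ ↦ g ξ * (Real.exp (φ ξ) : ℂ)) x‖ₑ
      ≤ ∫⁻ x, ∑' n : ℕ, ‖invFourierInt (fun ξ ↦ g ξ * (φ ξ : ℂ) ^ n) x / n.factorial‖ₑ := by
        refine lintegral_mono fun x ↦ ?_
        rw [← (hexp x).tsum_eq]
        exact enorm_tsum_le_tsum_enorm
    _ = ∑' n : ℕ, ∫⁻ x, ‖invFourierInt (fun ξ ↦ g ξ * (φ ξ : ℂ) ^ n) x / n.factorial‖ₑ :=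
        lintegral_tsum fun n ↦ ((hpow n).2.1.div_const _).1.enorm
    _ ≤ ∑' n : ℕ, ENNReal.ofReal (K ^ n / n.factorial * ∫ x, ‖invFourierInt g x‖) :=
        ENNReal.tsum_le_tsum hterm
    _ < ⊤ := (hsum.mul_right _).tsum_ofReal_lt_top

end InverseFourier

section Symbol

variable {σ : ℝ}

lemma integrableOn_Ioc_rpow_one_sub (hσ2 : σ < 2) :
    IntegrableOn (fun r : ℝ ↦ r ^ (1 - σ)) (Ioc 0 1) :=
  (intervalIntegrable_iff_integrableOn_Ioc_of_le zero_le_one).1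
    (intervalIntegral.intervalIntegrable_rpow' (by linarith))

lemma integrableOn_Ioi_rpow_neg_one_sub (hσ0 : 0 < σ) :
    IntegrableOn (fun r : ℝ ↦ r ^ (-1 - σ)) (Ioi 1) :=
  integrableOn_Ioi_rpow_of_lt (by linarith) one_pos

lemma measurable_one_sub_cos_mul_rpow (σ z : ℝ) :
    Measurable fun r : ℝ ↦ (1 - Real.cos (r * z)) * r ^ (-1 - σ) := by
  fun_prop

lemma integrableOn_one_sub_cos_mul_rpow (hσ0 : 0 < σ) (hσ2 : σ < 2) (z : ℝ) :
    IntegrableOn (fun r : ℝ ↦ (1 - Real.cos (r * z)) * r ^ (-1 - σ)) (Ioc 0 1) ∧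
    IntegrableOn (fun r : ℝ ↦ (1 - Real.cos (r * z)) * r ^ (-1 - σ)) (Ioi 1) := by
  constructor
  · refine ((integrableOn_Ioc_rpow_one_sub hσ2).const_mul (z ^ 2 / 2)).mono'
      (measurable_one_sub_cos_mul_rpow σ z).aestronglyMeasurable
      ((ae_restrict_iff' measurableSet_Ioc).2 (.of_forall fun r hr ↦ ?_))
    have h1 : r ^ (1 - σ) = r ^ 2 * r ^ (-1 - σ) := by
      rw [← Real.rpow_natCast, ← Real.rpow_add hr.1]
      norm_num
      ring_nf
    have h2 := Real.one_sub_sq_div_two_le_cos (x := r * z)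
    have h3 : 0 ≤ r ^ (-1 - σ) := Real.rpow_nonneg hr.1.le _
    rw [norm_mul, Real.norm_of_nonneg h3,
      Real.norm_of_nonneg (by linarith [Real.cos_le_one (r * z)]), h1, ← mul_assoc]
    gcongr
    linarith
  · refine ((integrableOn_Ioi_rpow_neg_one_sub hσ0).const_mul 2).mono'
      (measurable_one_sub_cos_mul_rpow σ z).aestronglyMeasurable
      ((ae_restrict_iff' measurableSet_Ioi).2 (.of_forall fun r hr ↦ ?_))
    have h3 : 0 ≤ r ^ (-1 - σ) := Real.rpow_nonneg (zero_le_one.trans (le_of_lt hr)) _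
    rw [norm_mul, Real.norm_of_nonneg h3,
      Real.norm_of_nonneg (by linarith [Real.cos_le_one (r * z)])]
    gcongr
    linarith [Real.neg_one_le_cos (r * z)]

/-- The part of the one-dimensional symbol due to small jumps. -/
def smallJumpSymb (σ z : ℝ) : ℝ := ∫ r in Ioc (0 : ℝ) 1, (1 - Real.cos (r * z)) * r ^ (-1 - σ)

lemma hasTemperateGrowth_smallJumpSymb (hσ2 : σ < 2) :
    Function.HasTemperateGrowth (smallJumpSymb σ) := by
  set ψ : ℝ → ℝ := fun z ↦ ∫ s in Ioc (0 : ℝ) 1, Real.cos ⟪s / 2, z⟫_ℝ • (1 : ℝ) with hψ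
  have hψt : ψ.HasTemperateGrowth := by
    refine hasTemperateGrowth_cos.integral_comp_inner (R := 1)
      (Measurable.aestronglyMeasurable (by fun_prop))
      ((ae_restrict_iff' measurableSet_Ioc).2 (.of_forall fun s hs ↦ ?_)) (integrable_const _)
    rw [Real.norm_of_nonneg (by linarith [hs.1])]
    linarith [hs.2]
  have hψs : ∀ z, z / 2 * ψ z = Real.sin (z / 2) := fun z ↦ by
    rcases eq_or_ne z 0 with rfl | hz
    · simp
    have h1 : ψ z = ∫ s in (0 : ℝ)..1, Real.cos (z / 2 * s) := by
      rw [intervalIntegral.integral_of_le zero_le_one]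
      simp only [hψ, smul_eq_mul, mul_one, RCLike.inner_apply, conj_trivial]
      congr 1 with s
      ring_nf
    rw [h1, intervalIntegral.mul_integral_comp_mul_left, integral_cos]
    simp
  have hsq : ∀ u, 1 - Real.cos u = u ^ 2 / 2 * ψ u ^ 2 := fun u ↦ by
    have h1 := Real.cos_two_mul (u / 2)
    rw [mul_div_cancel₀ u two_ne_zero] at h1
    have h2 := Real.sin_sq_add_cos_sq (u / 2)
    have h3 := hψs u
    have h4 : u ^ 2 / 2 * ψ u ^ 2 = 2 * (u / 2 * ψ u) ^ 2 := by ring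
    rw [h4, h3]
    linarith
  have hB : Function.HasTemperateGrowth
      (fun z ↦ ∫ r in Ioc (0 : ℝ) 1, (fun u ↦ ψ u ^ 2) ⟪r, z⟫_ℝ • r ^ (1 - σ)) := by
    refine Function.HasTemperateGrowth.integral_comp_inner (v := fun r : ℝ ↦ r) (R := 1)
      measurable_id.aestronglyMeasurable
      ((ae_restrict_iff' measurableSet_Ioc).2 (.of_forall fun s hs ↦ ?_)) (hψt.pow 2)
      (integrableOn_Ioc_rpow_one_sub hσ2)
    rw [Real.norm_of_nonneg hs.1.le]
    exact hs.2
  have heq : smallJumpSymb σ = fun z ↦ (1 / 2 * (z * z)) *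
      ∫ r in Ioc (0 : ℝ) 1, (fun u ↦ ψ u ^ 2) ⟪r, z⟫_ℝ • r ^ (1 - σ) := by
    ext z
    rw [smallJumpSymb, ← integral_const_mul]
    refine setIntegral_congr_fun measurableSet_Ioc fun r hr ↦ ?_
    have h1 : r ^ (1 - σ) = r ^ 2 * r ^ (-1 - σ) := by
      rw [← Real.rpow_natCast, ← Real.rpow_add hr.1]
      norm_num
      ring_nf
    simp only [hsq (r * z), h1, smul_eq_mul, RCLike.inner_apply, conj_trivial]
    rw [mul_comm z r]
    ring
  rw [heq]
  exact ((Function.HasTemperateGrowth.const _).mul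
    (Function.HasTemperateGrowth.id'.mul Function.HasTemperateGrowth.id')).mul hB

lemma integral_one_sub_cos_eq_small_add_large (hσ0 : 0 < σ) (hσ2 : σ < 2) (z : ℝ) :
    ∫ r in Ioi (0 : ℝ), (1 - Real.cos (r * z)) * r ^ (-1 - σ) =
      smallJumpSymb σ z + ((∫ r in Ioi (1 : ℝ), r ^ (-1 - σ)) -
        ∫ r in Ioi (1 : ℝ), Real.cos (r * z) * r ^ (-1 - σ)) := by
  obtain ⟨h1, h2⟩ := integrableOn_one_sub_cos_mul_rpow hσ0 hσ2 z
  rw [← Ioc_union_Ioi_eq_Ioi (zero_le_one (α := ℝ)),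
    setIntegral_union (Ioc_disjoint_Ioi le_rfl) measurableSet_Ioi h1 h2, smallJumpSymb,
    ← integral_sub (integrableOn_Ioi_rpow_neg_one_sub hσ0)]
  · congr 2 with r
    ring
  · exact (integrableOn_Ioi_rpow_neg_one_sub hσ0).bdd_mul (c := 1)
      (Measurable.aestronglyMeasurable (by fun_prop)) (.of_forall fun r ↦ Real.abs_cos_le_one _)

lemma integral_one_sub_cos_eq_rpow (hσ0 : 0 < σ) (z : ℝ) :
    ∫ r in Ioi (0 : ℝ), (1 - Real.cos (r * z)) * r ^ (-1 - σ) =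
      (∫ r in Ioi (0 : ℝ), (1 - Real.cos r) * r ^ (-1 - σ)) * |z| ^ σ := by
  rcases eq_or_ne z 0 with rfl | hz
  · simp [Real.zero_rpow hσ0.ne']
  have hz' : 0 < |z| := abs_pos.2 hz
  have h1 := integral_comp_mul_left_Ioi (fun r ↦ (1 - Real.cos r) * r ^ (-1 - σ)) 0 hz'
  rw [mul_zero] at h1
  have h2 : ∫ r in Ioi (0 : ℝ), (1 - Real.cos (r * z)) * r ^ (-1 - σ) =
      ∫ r in Ioi (0 : ℝ), |z| ^ (1 + σ) *
        ((1 - Real.cos (|z| * r)) * (|z| * r) ^ (-1 - σ)) := by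
    refine setIntegral_congr_fun measurableSet_Ioi fun r hr ↦ ?_
    have h3 : |z| ^ (1 + σ) * |z| ^ (-1 - σ) = 1 := by
      rw [← Real.rpow_add hz']
      ring_nf
      simp
    have h4 : Real.cos (|z| * r) = Real.cos (r * z) := by
      rw [← Real.cos_abs (r * z), abs_mul, abs_of_pos (mem_Ioi.1 hr), mul_comm]
    simp only [h4, Real.mul_rpow hz'.le (le_of_lt (mem_Ioi.1 hr))]
    linear_combination (-(1 - Real.cos (r * z)) * r ^ (-1 - σ)) * h3
  rw [h2, integral_const_mul, h1, smul_eq_mul, Real.rpow_add hz', Real.rpow_one]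
  field_simp

lemma integral_one_sub_cos_pos (hσ0 : 0 < σ) (hσ2 : σ < 2) :
    0 < ∫ r in Ioi (0 : ℝ), (1 - Real.cos r) * r ^ (-1 - σ) := by
  have hint : IntegrableOn (fun r : ℝ ↦ (1 - Real.cos r) * r ^ (-1 - σ)) (Ioi 0) := by
    obtain ⟨h1, h2⟩ := integrableOn_one_sub_cos_mul_rpow hσ0 hσ2 1
    rw [← Ioc_union_Ioi_eq_Ioi (zero_le_one (α := ℝ))]
    simpa only [mul_one] using h1.union h2
  rw [setIntegral_pos_iff_support_of_nonneg_ae _ hint]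
  · refine lt_of_lt_of_le ?_ (measure_mono (s := Ioo 0 1) fun r hr ↦ ⟨?_, hr.1⟩)
    · simp
    · have h1 := Real.cos_lt_cos_of_nonneg_of_le_pi le_rfl
        (by linarith [hr.2, Real.pi_gt_three]) hr.1
      rw [Real.cos_zero] at h1
      exact (mul_pos (by linarith) (Real.rpow_pos_of_pos hr.1 _)).ne'
  · refine (ae_restrict_iff' measurableSet_Ioi).2 (.of_forall fun r hr ↦ ?_)
    exact mul_nonneg (by linarith [Real.cos_le_one r]) (Real.rpow_nonneg (le_of_lt hr) _)

variable {N : ℕ} {μ : Measure (Sph N)}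

lemma le_symb (hσ0 : 0 < σ) {lam : ℝ} (hσ2 : σ < 2) (hell : Elliptic N σ μ lam) (ξ : Eu N) :
    (∫ r in Ioi (0 : ℝ), (1 - Real.cos r) * r ^ (-1 - σ)) * lam * ‖ξ‖ ^ σ ≤ symb N σ μ ξ := by
  have hC := integral_one_sub_cos_pos hσ0 hσ2
  simp only [symb, integral_one_sub_cos_eq_rpow hσ0, integral_const_mul]
  rw [mul_assoc]
  refine mul_le_mul_of_nonneg_left ?_ hC.le
  rcases eq_or_ne ξ 0 with rfl | hξ
  · simp [Real.zero_rpow hσ0.ne']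
  have hn : 0 < ‖ξ‖ := norm_pos_iff.2 hξ
  have h1 := hell ⟨‖ξ‖⁻¹ • ξ, by simp [norm_smul, hn.ne']⟩
  have h2 : ∀ θ : Sph N, |⟪‖ξ‖⁻¹ • ξ, (θ : Eu N)⟫_ℝ| ^ σ =
      (‖ξ‖ ^ σ)⁻¹ * |⟪ξ, (θ : Eu N)⟫_ℝ| ^ σ := fun θ ↦ by
    rw [real_inner_smul_left, abs_mul, abs_of_pos (inv_pos.2 hn),
      Real.mul_rpow (inv_pos.2 hn).le (abs_nonneg _), Real.inv_rpow hn.le]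
  simp only [h2, integral_const_mul] at h1
  rwa [inv_mul_eq_div, le_div_iff₀ (by positivity)] at h1

lemma norm_inner_sphere_le (ξ : Eu N) (θ : Sph N) : ‖⟪ξ, (θ : Eu N)⟫_ℝ‖ ≤ ‖ξ‖ := by
  simpa using norm_inner_le_norm (𝕜 := ℝ) ξ (θ : Eu N)

variable [IsFiniteMeasure μ]

lemma integrable_comp_inner_sphere {f : ℝ → ℝ} (hf : Continuous f) (ξ : Eu N) :
    Integrable (fun θ : Sph N ↦ f ⟪ξ, (θ : Eu N)⟫_ℝ) μ := by
  obtain ⟨C, hC⟩ := (isCompact_closedBall (0 : ℝ) ‖ξ‖).exists_bound_of_continuousOn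
    hf.continuousOn
  refine Integrable.of_bound (C := C) (Continuous.aestronglyMeasurable (by fun_prop))
    (.of_forall fun θ ↦ hC _ ?_)
  rw [mem_closedBall_zero_iff]
  exact norm_inner_sphere_le ξ θ

/-- The symbol is the sum of a smooth symbol of temperate growth and a constant, minus the cosine
transform of a finite measure. -/
lemma exists_symb_eq (hσ0 : 0 < σ) (hσ2 : σ < 2) :
    ∃ (ms φ : Eu N → ℝ) (c K : ℝ), ms.HasTemperateGrowth ∧ IsFourierMultiplier φ K ∧
      ∀ ξ, symb N σ μ ξ = ms ξ + c - φ ξ := by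
  have hκ := hasTemperateGrowth_smallJumpSymb hσ2
  have hT : Integrable (fun p : Sph N × ℝ ↦ p.2 ^ (-1 - σ))
      (μ.prod (volume.restrict (Ioi 1))) :=
    Integrable.comp_snd (integrableOn_Ioi_rpow_neg_one_sub hσ0) μ
  have hv : Measurable fun p : Sph N × ℝ ↦ p.2 • (p.1 : Eu N) := by fun_prop
  refine ⟨fun ξ ↦ ∫ θ : Sph N, smallJumpSymb σ ⟪(θ : Eu N), ξ⟫_ℝ • (1 : ℝ) ∂μ, _,
    ∫ _ : Sph N, (∫ r in Ioi (1 : ℝ), r ^ (-1 - σ)) ∂μ, _,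
    hκ.integral_comp_inner (R := 1) (Continuous.aestronglyMeasurable (by fun_prop))
      (.of_forall fun θ ↦ by simp) (integrable_const _),
    isFourierMultiplier_integral_cos hv hT, fun ξ ↦ ?_⟩
  have hint : Integrable (fun p : Sph N × ℝ ↦
      Real.cos ⟪p.2 • (p.1 : Eu N), ξ⟫_ℝ * p.2 ^ (-1 - σ))
      (μ.prod (volume.restrict (Ioi 1))) :=
    hT.bdd_mul (c := 1) (Continuous.aestronglyMeasurable (by fun_prop))
      (.of_forall fun p ↦ Real.abs_cos_le_one _)
  have hcos : ∀ (θ : Sph N) (r : ℝ), Real.cos ⟪r • (θ : Eu N), ξ⟫_ℝ =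
      Real.cos (r * ⟪ξ, (θ : Eu N)⟫_ℝ) := fun θ r ↦ by
    rw [real_inner_smul_left, real_inner_comm]
  have h1 := hint.integral_prod_left
  simp only [hcos] at h1
  have h2 : Integrable (fun θ : Sph N ↦ (∫ r in Ioi (1 : ℝ), r ^ (-1 - σ)) -
      ∫ r in Ioi (1 : ℝ), Real.cos (r * ⟪ξ, (θ : Eu N)⟫_ℝ) * r ^ (-1 - σ)) μ :=
    (integrable_const _).sub h1
  simp only [symb, integral_one_sub_cos_eq_small_add_large hσ0 hσ2]
  rw [integral_prod _ hint, integral_add (integrable_comp_inner_sphere hκ.1.continuous ξ) h2,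
    integral_sub (integrable_const _) h1, ← add_sub_assoc]
  simp only [hcos, smul_eq_mul, mul_one, fun θ : Sph N ↦ real_inner_comm ξ (θ : Eu N)]

/-- The Fourier side of `𝓛Φ`. -/
lemma LkPhi_one_eq (N : ℕ) (σ : ℝ) (μ : Measure (Sph N)) (x : Eu N) :
    LkPhi N σ μ 1 x = (2 * π) ^ (-(N : ℝ)) * (invFourierInt (fun ξ : Eu N ↦
      ((symb N σ μ ξ * Real.exp (-symb N σ μ ξ) : ℝ) : ℂ)) x).re := by
  simp [LkPhi, invFourierInt]

/-- `𝓛Φ` is continuous and integrable, with zero mean. -/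
lemma LkPhi_one_properties (hσ0 : 0 < σ) (hσ2 : σ < 2) {lam : ℝ} (hlam : 0 < lam)
    (hell : Elliptic N σ μ lam) :
    Continuous (LkPhi N σ μ 1) ∧ Integrable (LkPhi N σ μ 1) ∧ ∫ x, LkPhi N σ μ 1 x = 0 := by
  obtain ⟨ms, φ, c, K, hms, hφ, hsymb⟩ := exists_symb_eq (μ := μ) hσ0 hσ2
  have hC := integral_one_sub_cos_pos hσ0 hσ2
  set C := ∫ r in Ioi (0 : ℝ), (1 - Real.cos r) * r ^ (-1 - σ)
  have hlow : ∀ ξ, C * lam * ‖ξ‖ ^ σ - (c + K) ≤ ms ξ := fun ξ ↦ by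
    have h1 := le_symb hσ0 hσ2 hell ξ
    have h2 := neg_le_of_abs_le (hφ.norm_le ξ)
    rw [hsymb] at h1
    linarith
  obtain ⟨S₀, hS₀⟩ := exists_schwartzMap_mul_exp_neg hms (.const 1) (mul_pos hC hlam) hσ0 hlow
  obtain ⟨S₁, hS₁⟩ := exists_schwartzMap_mul_exp_neg hms
    (hms.add (.const c)) (mul_pos hC hlam) hσ0 hlow
  set g : Eu N → ℂ := fun ξ ↦ ((symb N σ μ ξ * Real.exp (-symb N σ μ ξ) : ℝ) : ℂ) with hg
  have hS₀int := S₀.integrable (μ := volume)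
  have hS₁int := S₁.integrable (μ := volume)
  have hS₀F := integrable_invFourierInt_schwartzMap S₀
  have hS₁F := integrable_invFourierInt_schwartzMap S₁
  set h : Eu N → ℂ := fun ξ ↦ S₁ ξ - S₀ ξ * φ ξ with hh
  have hhint : Integrable h := hS₁int.sub (hφ.integrable_mul hS₀int)
  have hhF : Integrable (invFourierInt h) := by
    refine (hS₁F.sub (hφ.integrable _ hS₀int hS₀F)).congr (.of_forall fun x ↦ ?_)
    simp only [Pi.sub_apply, invFourierInt, hh, sub_mul]
    exact (integral_sub (integrable_mul_exp_inner hS₁int x)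
      (integrable_mul_exp_inner (hφ.integrable_mul hS₀int) x)).symm
  have hgh : g = fun ξ ↦ (Real.exp (-c) : ℂ) * (h ξ * (Real.exp (φ ξ) : ℂ)) := by
    ext ξ
    simp only [hg, hh, hS₀, hS₁, hsymb]
    rw [show -(ms ξ + c - φ ξ) = -ms ξ + (-c + φ ξ) by ring, Real.exp_add, Real.exp_add]
    simp only [Pi.add_apply]
    push_cast
    ring
  have hgc : Continuous g := by
    have h1 : Continuous (symb N σ μ) := by
      rw [show symb N σ μ = fun ξ ↦ ms ξ + c - φ ξ from funext hsymb]
      exact (hms.1.continuous.add continuous_const).sub hφ.continuous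
    exact Complex.continuous_ofReal.comp (h1.mul (Real.continuous_exp.comp h1.neg))
  have hgint : Integrable g := by
    rw [hgh]
    refine (hhint.mul_bdd (c := Real.exp K) (Complex.continuous_ofReal.comp
      (Real.continuous_exp.comp hφ.continuous)).aestronglyMeasurable
      (.of_forall fun ξ ↦ ?_)).const_mul _
    rw [Function.comp_apply, Complex.norm_real, Function.comp_apply,
      Real.norm_of_nonneg (Real.exp_pos _).le]
    exact Real.exp_le_exp.2 ((le_abs_self _).trans (hφ.norm_le ξ))
  have hgF : Integrable (invFourierInt g) := by
    refine ((hφ.integrable_invFourierInt_mul_exp hhint hhF).const_mul (Real.exp (-c) : ℂ)).congr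
      (.of_forall fun x ↦ ?_)
    simp only [hgh, invFourierInt]
    rw [← integral_const_mul]
    simp only [mul_assoc]
  have hzero : ∫ x, invFourierInt g x = 0 := by
    rw [integral_invFourierInt hgc hgint hgF]
    simp [hg, symb]
  have hL : LkPhi N σ μ 1 = fun x ↦ (2 * π) ^ (-(N : ℝ)) * (invFourierInt g x).re :=
    funext (LkPhi_one_eq N σ μ)
  rw [hL]
  refine ⟨continuous_const.mul (Complex.continuous_re.comp (continuous_invFourierInt hgint)),
    hgF.re.const_mul _, ?_⟩
  have h1 : ∫ x, (invFourierInt g x).re = 0 := by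
    have := integral_re hgF
    simp only [RCLike.re_eq_complex_re] at this
    rw [this, hzero, Complex.zero_re]
  rw [integral_const_mul, h1, mul_zero]

end Symbol

section Annulus

variable {σ a b : ℝ} {N : ℕ}

lemma lintegral_eq_lintegral_comp_smul {f : Eu N → ℝ≥0∞} (hf : Measurable f) {c : ℝ}
    (hc : 0 < c) :
    ∫⁻ x, f x = ENNReal.ofReal (c ^ (N : ℝ)) * ∫⁻ y, f (c • y) := by
  have h1 : ∫⁻ y, f (c • y) = ∫⁻ x, f x ∂(Measure.map (c • ·) (volume : Measure (Eu N))) :=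
    (lintegral_map hf (measurable_const_smul c)).symm
  rw [h1, Measure.map_addHaar_smul volume hc.ne', lintegral_smul_measure, smul_eq_mul,
    ← mul_assoc, ← ENNReal.ofReal_mul (by positivity), finrank_euclideanSpace_fin,
    abs_of_pos (by positivity), Real.rpow_natCast, mul_inv_cancel₀ (by positivity)]
  simp

/-- In the variable `t`, the parabolic shell condition over a rescaled point is an interval whose
endpoints have ratio `b ^ σ / a ^ σ`. -/
lemma setOf_rpow_mul_eq_Ioo (hσ0 : 0 < σ) (ha : 0 < a) (hb : 0 < b) {s : ℝ} (hs : 0 < s) :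
    {t : ℝ | 0 < t ∧ a ^ 2 < t ^ (2 / σ) * s ∧ t ^ (2 / σ) * s < b ^ 2} =
      Ioo (a ^ σ / s ^ (σ / 2)) (b ^ σ / s ^ (σ / 2)) := by
  have hs' : 0 < s ^ (σ / 2) := Real.rpow_pos_of_pos hs _
  have key : ∀ {c t : ℝ}, 0 < c → 0 < t →
      (c ^ 2) ^ (σ / 2) = c ^ σ ∧ (t ^ (2 / σ) * s) ^ (σ / 2) = t * s ^ (σ / 2) := by
    intro c t hc ht
    constructor
    · rw [← Real.rpow_natCast, ← Real.rpow_mul hc.le]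
      congr 1
      push_cast
      ring
    · rw [Real.mul_rpow (by positivity) hs.le, ← Real.rpow_mul ht.le,
        div_mul_div_cancel₀ hσ0.ne', div_self two_ne_zero, Real.rpow_one]
  ext t
  simp only [mem_ofPred_eq, mem_Ioo]
  have hσ' : 0 < σ / 2 := by positivity
  constructor
  · rintro ⟨ht, h1, h2⟩
    rw [← Real.rpow_lt_rpow_iff (by positivity) (by positivity) hσ'] at h1 h2
    rw [(key ha ht).1, (key ha ht).2] at h1
    rw [(key hb ht).1, (key hb ht).2] at h2
    exact ⟨(div_lt_iff₀ hs').2 h1, (lt_div_iff₀ hs').2 h2⟩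
  · rintro ⟨h1, h2⟩
    have ht : 0 < t := lt_trans (by positivity) h1
    rw [div_lt_iff₀ hs'] at h1
    rw [lt_div_iff₀ hs'] at h2
    refine ⟨ht, ?_, ?_⟩
    · rw [← Real.rpow_lt_rpow_iff (by positivity) (by positivity) hσ', (key ha ht).1,
        (key ha ht).2]
      exact h1
    · rw [← Real.rpow_lt_rpow_iff (by positivity) (by positivity) hσ', (key hb ht).1,
        (key hb ht).2]
      exact h2

lemma lintegral_Ioo_inv {x y : ℝ} (hx : 0 < x) (hxy : x ≤ y) :
    ∫⁻ t in Ioo x y, ENNReal.ofReal t⁻¹ = ENNReal.ofReal (Real.log (y / x)) := by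
  have hnot : (0 : ℝ) ∉ uIcc x y := fun h ↦ by
    rw [uIcc_of_le hxy] at h
    exact hx.not_ge h.1
  have h1 : IntervalIntegrable (fun t : ℝ ↦ t⁻¹) volume x y :=
    intervalIntegral.intervalIntegrable_inv (fun t ht h ↦ hnot (h ▸ ht)) continuousOn_id
  rw [intervalIntegrable_iff_integrableOn_Ioo_of_le hxy] at h1
  rw [← integral_inv hnot, intervalIntegral.integral_of_le hxy, integral_Ioc_eq_integral_Ioo,
    ofReal_integral_eq_lintegral_ofReal h1]
  exact (ae_restrict_iff' measurableSet_Ioo).2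
    (.of_forall fun t ht ↦ (inv_pos.2 (hx.trans ht.1)).le)

/-- The upper half `B⁺_{a,b}` of the `σ`-parabolic annulus. -/
def parabolicShell (N : ℕ) (σ a b : ℝ) : Set (Eu N × ℝ) :=
  {q | 0 < q.2 ∧ a ^ 2 < ‖q.1‖ ^ 2 + q.2 ^ (2 / σ) ∧ ‖q.1‖ ^ 2 + q.2 ^ (2 / σ) < b ^ 2}

lemma measurableSet_parabolicShell : MeasurableSet (parabolicShell N σ a b) := by
  have h : Measurable fun q : Eu N × ℝ ↦ ‖q.1‖ ^ 2 + q.2 ^ (2 / σ) := by fun_prop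
  exact (measurableSet_lt measurable_const measurable_snd).inter
    ((measurableSet_lt measurable_const h).inter (measurableSet_lt h measurable_const))

/-- Integrating a self-similar function of critical homogeneity over a `σ`-parabolic annulus
decouples the profile from the scale. -/
lemma setLIntegral_parabolicShell (hσ0 : 0 < σ) (ha : 0 < a) (hab : a < b) {H : Eu N → ℝ≥0∞}
    (hH : Measurable H) :
    ∫⁻ q in parabolicShell N σ a b, ENNReal.ofReal (q.2 ^ (-(N : ℝ) / σ - 1)) *
        H ((q.2 ^ (-(1 : ℝ) / σ)) • q.1) =
      (∫⁻ y, H y) * ENNReal.ofReal (Real.log (b ^ σ / a ^ σ)) := by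
  set A : Set (Eu N × ℝ) :=
    {q | 0 < q.2 ∧ a ^ 2 < q.2 ^ (2 / σ) * (1 + ‖q.1‖ ^ 2) ∧
      q.2 ^ (2 / σ) * (1 + ‖q.1‖ ^ 2) < b ^ 2} with hA
  have hAm : MeasurableSet A := by
    have h : Measurable fun q : Eu N × ℝ ↦ q.2 ^ (2 / σ) * (1 + ‖q.1‖ ^ 2) := by fun_prop
    exact (measurableSet_lt measurable_const measurable_snd).inter
      ((measurableSet_lt measurable_const h).inter (measurableSet_lt h measurable_const))
  have hAH : Measurable (A.indicator fun q ↦ H q.1 * ENNReal.ofReal q.2⁻¹) :=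
    Measurable.indicator (by fun_prop) hAm
  have hBH : Measurable ((parabolicShell N σ a b).indicator fun q ↦
      ENNReal.ofReal (q.2 ^ (-(N : ℝ) / σ - 1)) * H ((q.2 ^ (-(1 : ℝ) / σ)) • q.1)) :=
    Measurable.indicator (by fun_prop) measurableSet_parabolicShell
  have hscale : ∀ t : ℝ,
      ∫⁻ x, (parabolicShell N σ a b).indicator (fun q ↦
        ENNReal.ofReal (q.2 ^ (-(N : ℝ) / σ - 1)) * H ((q.2 ^ (-(1 : ℝ) / σ)) • q.1)) (x, t) =
      ∫⁻ y, A.indicator (fun q ↦ H q.1 * ENNReal.ofReal q.2⁻¹) (y, t) := by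
    intro t
    rcases le_or_gt t 0 with ht | ht
    · simp [parabolicShell, hA, indicator, ht.not_gt]
    have hc : 0 < t ^ (1 / σ) := Real.rpow_pos_of_pos ht _
    have hcN : 0 ≤ (t ^ (1 / σ)) ^ (N : ℝ) := by positivity
    have hBt := hBH.comp (measurable_prodMk_right (y := t))
    refine (lintegral_eq_lintegral_comp_smul hBt hc).trans ?_
    refine (lintegral_const_mul _ (hBt.comp (measurable_const_smul (t ^ (1 / σ))))).symm.trans
      (lintegral_congr fun y ↦ ?_)
    simp only [Function.comp_apply]
    have hmem : (t ^ (1 / σ) • y, t) ∈ parabolicShell N σ a b ↔ (y, t) ∈ A := by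
      have h1 : ‖t ^ (1 / σ) • y‖ ^ 2 + t ^ (2 / σ) = t ^ (2 / σ) * (1 + ‖y‖ ^ 2) := by
        rw [norm_smul, Real.norm_of_nonneg hc.le, mul_pow, ← Real.rpow_natCast (t ^ (1 / σ)),
          ← Real.rpow_mul ht.le]
        push_cast
        ring_nf
      simp only [parabolicShell, hA, mem_ofPred_eq, h1]
    by_cases hy : (y, t) ∈ A
    · rw [indicator_of_mem hy, indicator_of_mem (hmem.2 hy), smul_smul, ← Real.rpow_add ht,
        ← mul_assoc, ← ENNReal.ofReal_mul hcN, ← Real.rpow_mul ht.le, ← Real.rpow_add ht,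
        mul_comm]
      rw [show -1 / σ + 1 / σ = 0 by ring, show 1 / σ * N + (-N / σ - 1) = -1 by ring,
        Real.rpow_zero, one_smul, Real.rpow_neg_one]
    · rw [indicator_of_notMem hy, indicator_of_notMem (fun h ↦ hy (hmem.1 h)), mul_zero]
  have hsec : ∀ y : Eu N, ∫⁻ t, A.indicator (fun q ↦ H q.1 * ENNReal.ofReal q.2⁻¹) (y, t) =
      H y * ENNReal.ofReal (Real.log (b ^ σ / a ^ σ)) := by
    intro y
    have hs : 0 < 1 + ‖y‖ ^ 2 := by positivity
    have hb := ha.trans hab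
    have hI := setOf_rpow_mul_eq_Ioo hσ0 ha hb hs
    have hs' : 0 < (1 + ‖y‖ ^ 2) ^ (σ / 2) := Real.rpow_pos_of_pos hs _
    have h1 := lintegral_Ioo_inv (x := a ^ σ / (1 + ‖y‖ ^ 2) ^ (σ / 2))
      (y := b ^ σ / (1 + ‖y‖ ^ 2) ^ (σ / 2)) (by positivity) (by gcongr)
    rw [div_div_div_cancel_right₀ hs'.ne', ← lintegral_indicator measurableSet_Ioo, ← hI] at h1
    rw [← h1, ← lintegral_const_mul _
      (Measurable.indicator (by fun_prop) (hI ▸ measurableSet_Ioo))]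
    congr 1 with t
    simp only [indicator, hA, mem_ofPred_eq]
    split_ifs <;> simp
  rw [← lintegral_indicator measurableSet_parabolicShell, Measure.volume_eq_prod,
    lintegral_prod_symm]
  · simp only [hscale]
    rw [lintegral_lintegral_swap]
    · simp only [hsec]
      rw [lintegral_mul_const _ hH]
    · exact (hAH.comp measurable_swap).aemeasurable
  · exact hBH.aemeasurable

/-- A self-similar function of critical homogeneity with a mean-zero profile has zero integral
over every `σ`-parabolic annulus. -/
lemma integral_parabolicShell (hσ0 : 0 < σ) (ha : 0 < a) (hab : a < b) {F : Eu N → ℝ}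
    (hF : Continuous F) (hFi : Integrable F) (hF0 : ∫ x, F x = 0) :
    IntegrableOn (fun q : Eu N × ℝ ↦ q.2 ^ (-(N : ℝ) / σ - 1) *
        F ((q.2 ^ (-(1 : ℝ) / σ)) • q.1)) (parabolicShell N σ a b) ∧
      ∫ q in parabolicShell N σ a b, q.2 ^ (-(N : ℝ) / σ - 1) *
        F ((q.2 ^ (-(1 : ℝ) / σ)) • q.1) = 0 := by
  have hmeas : Measurable (fun q : Eu N × ℝ ↦ q.2 ^ (-(N : ℝ) / σ - 1) *
      F ((q.2 ^ (-(1 : ℝ) / σ)) • q.1)) := by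
    have := hF.measurable
    fun_prop
  have hofReal : ∀ G : Eu N → ℝ, Continuous G →
      ∫⁻ q in parabolicShell N σ a b, ENNReal.ofReal (q.2 ^ (-(N : ℝ) / σ - 1) *
        G ((q.2 ^ (-(1 : ℝ) / σ)) • q.1)) =
      (∫⁻ y, ENNReal.ofReal (G y)) * ENNReal.ofReal (Real.log (b ^ σ / a ^ σ)) := by
    intro G hG
    rw [← setLIntegral_parabolicShell hσ0 ha hab hG.measurable.ennreal_ofReal]
    refine setLIntegral_congr_fun measurableSet_parabolicShell fun q hq ↦ ?_
    exact ENNReal.ofReal_mul (Real.rpow_nonneg hq.1.le _)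
  have hint : IntegrableOn (fun q : Eu N × ℝ ↦ q.2 ^ (-(N : ℝ) / σ - 1) *
      F ((q.2 ^ (-(1 : ℝ) / σ)) • q.1)) (parabolicShell N σ a b) := by
    refine ⟨hmeas.aestronglyMeasurable, ?_⟩
    rw [hasFiniteIntegral_iff_norm]
    have h1 := hofReal _ hF.norm
    rw [← setLIntegral_congr_fun measurableSet_parabolicShell fun q hq ↦ ?_, h1]
    · exact ENNReal.mul_lt_top (hasFiniteIntegral_iff_norm _ |>.1 hFi.2) ENNReal.ofReal_lt_top
    · simp only [norm_mul, Real.norm_of_nonneg (Real.rpow_nonneg hq.1.le _)]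
  refine ⟨hint, ?_⟩
  rw [integral_eq_lintegral_pos_part_sub_lintegral_neg_part hint, hofReal F hF]
  simp only [← mul_neg]
  rw [hofReal (fun y ↦ -F y) hF.neg, ENNReal.toReal_mul, ENNReal.toReal_mul, ← sub_mul]
  have h2 := integral_eq_lintegral_pos_part_sub_lintegral_neg_part hFi
  rw [← h2, hF0, zero_mul]

end Annulus

/-- Cancellation property of `𝓛P` on σ-parabolic annuli:
`∫_{B⁺_{a,b}} 𝓛P = 0`, the integrand being absolutely integrable there. -/
theorem stmt10 (N : ℕ) (hN : 1 ≤ N) (σ : ℝ) (hσ0 : 0 < σ) (hσ2 : σ < 2)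
    (μ : Measure (Sph N)) [IsFiniteMeasure μ]
    (lam : ℝ) (hlam : 0 < lam) (hell : Elliptic N σ μ lam)
    (a b : ℝ) (ha : 0 < a) (hab : a < b) :
    IntegrableOn (fun q : Eu N × ℝ => LheatK N σ μ q.1 q.2)
      {q : Eu N × ℝ | 0 < q.2 ∧ a ^ 2 < ‖q.1‖ ^ 2 + q.2 ^ (2 / σ) ∧
        ‖q.1‖ ^ 2 + q.2 ^ (2 / σ) < b ^ 2} volume ∧
    ∫ q : Eu N × ℝ in {q : Eu N × ℝ | 0 < q.2 ∧ a ^ 2 < ‖q.1‖ ^ 2 + q.2 ^ (2 / σ) ∧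
        ‖q.1‖ ^ 2 + q.2 ^ (2 / σ) < b ^ 2}, LheatK N σ μ q.1 q.2 = 0 := by
  obtain ⟨h1, h2, h3⟩ := LkPhi_one_properties hσ0 hσ2 hlam hell
  exact integral_parabolicShell hσ0 ha hab h1 h2 h3
end
end
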